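/- Every 6-dimensional finite-volume right-angled convex hyperbolic polyhedron has at least 27 facets: a₅(P) ≥ 27. -/

import Mathlib

open scoped BigOperators

noncomputable section

/-- The Minkowski bilinear form `⟨x,y⟩ = -x₀y₀ + x₁y₁ + ⋯ + xₙyₙ` on `ℝ^{n+1}`. -/
def mink {n : ℕ} (x y : Fin (n + 1) → ℝ) : ℝ :=
  -(x 0 * y 0) + ∑ i : Fin n, x i.succ * y i.succ

/-- The hyperboloid model of the hyperbolic space `ℍⁿ`. -/
def Hyperboloid (n : ℕ) : Set (Fin (n + 1) → ℝ) :=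
  {x | mink x x = -1 ∧ 0 < x 0}

/-- The Klein projection `x ↦ (x₁/x₀, …, xₙ/x₀)` of the hyperboloid onto the unit ball. -/
def kleinMap {n : ℕ} (x : Fin (n + 1) → ℝ) : EuclideanSpace ℝ (Fin n) :=
  WithLp.toLp 2 fun i => x i.succ / x 0

/-- Dimension of a subset of a real vector space: the rank of its vector span. -/
def sdim {n : ℕ} (s : Set (EuclideanSpace ℝ (Fin n))) : ℕ :=
  Module.finrank ℝ (vectorSpan ℝ s)

/-- A convex hyperbolic `n`-polyhedron: a finite intersection of hyperbolic half-spaces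
`H_{eᵢ}⁻ = {x : ⟨eᵢ,x⟩ ≤ 0}` (with `⟨eᵢ,eᵢ⟩ = 1`) having nonempty interior
(equivalently, its Klein-model image has nonempty interior in `ℝⁿ`). -/
structure HypPolyhedron (n : ℕ) where
  m : ℕ
  e : Fin m → (Fin (n + 1) → ℝ)
  unit : ∀ i, mink (e i) (e i) = 1
  nonempty_int :
    (interior (kleinMap '' {x ∈ Hyperboloid n | ∀ i, mink (e i) x ≤ 0})).Nonempty

namespace HypPolyhedron

variable {n : ℕ} (P : HypPolyhedron n)

/-- The set of points of the polyhedron in the hyperboloid model. -/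
def carrier : Set (Fin (n + 1) → ℝ) :=
  {x ∈ Hyperboloid n | ∀ i, mink (P.e i) x ≤ 0}

/-- `P̄`: the closure of the Klein-model image of the polyhedron in the closed unit ball. -/
def cl : Set (EuclideanSpace ℝ (Fin n)) :=
  closure (kleinMap '' P.carrier)

/-- The `k`-faces of `P`: the `k`-dimensional (nonempty) exposed faces of `P̄`. -/
def faces (k : ℕ) : Set (Set (EuclideanSpace ℝ (Fin n))) :=
  {F | IsExposed ℝ P.cl F ∧ F.Nonempty ∧ sdim F = k}

/-- `a_k(P)`: the number of `k`-faces of `P`. -/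
def a (k : ℕ) : ℕ := (P.faces k).ncard

/-- Vertices of `P`: the points of `0`-dimensional exposed faces of `P̄`. -/
def verts : Set (EuclideanSpace ℝ (Fin n)) :=
  {v | IsExposed ℝ P.cl {v}}

/-- Ideal vertices: vertices lying on the unit sphere. -/
def idealVerts : Set (EuclideanSpace ℝ (Fin n)) :=
  {v ∈ P.verts | ‖v‖ = 1}

/-- Finite vertices: vertices lying in the open unit ball. -/
def finiteVerts : Set (EuclideanSpace ℝ (Fin n)) :=
  {v ∈ P.verts | ‖v‖ < 1}

/-- `v_∞(P)`: the number of ideal vertices of `P`. -/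
def vInf : ℕ := P.idealVerts.ncard

/-- The bounding hyperplane `H_e` contains the face `F`. -/
def faceInHyperplane (e : Fin (n + 1) → ℝ) (F : Set (EuclideanSpace ℝ (Fin n))) : Prop :=
  ∀ x ∈ P.carrier, kleinMap x ∈ F → mink e x = 0

/-- `P` is right-angled: whenever two distinct bounding hyperplanes both contain an
`(n-2)`-dimensional face of `P`, the corresponding unit normals are orthogonal,
i.e. the dihedral angle is `π/2`. -/
def IsRightAngled : Prop :=
  ∀ i j : Fin P.m, i ≠ j →
    (∃ F ∈ P.faces (n - 2), P.faceInHyperplane (P.e i) F ∧ P.faceInHyperplane (P.e j) F) →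
    mink (P.e i) (P.e j) = 0

/-- `P` has finite volume: `P̄` is the convex hull of its (finitely many) vertices. -/
def FiniteVolume : Prop :=
  P.verts.Finite ∧ P.cl = convexHull ℝ P.verts

/-- `P` is compact: finite volume and all vertices are finite. -/
def IsCompactPoly : Prop :=
  P.FiniteVolume ∧ ∀ v ∈ P.verts, ‖v‖ < 1

/-- `P` is ideal: finite volume and all vertices are ideal. -/
def IsIdeal : Prop :=
  P.FiniteVolume ∧ ∀ v ∈ P.verts, ‖v‖ = 1

end HypPolyhedron

/-- `ν(P) = a_{n-1}(P) + v_∞(P)` ranging over the family `𝒫ⁿ` of finite-volume non-compact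
right-angled convex hyperbolic `n`-polyhedra. -/
def nuSet (n : ℕ) : Set ℕ :=
  {m | ∃ P : HypPolyhedron n,
        P.FiniteVolume ∧ P.IsRightAngled ∧ ¬ P.IsCompactPoly ∧ P.a (n - 1) + P.vInf = m}

/-- `νₙ = sInf {ν(P) : P ∈ 𝒫ⁿ}` (with `sInf ∅ = 0`). -/
def nu (n : ℕ) : ℕ := sInf (nuSet n)

/-! ### The Minkowski form -/

section Minkowski

variable {n : ℕ}

theorem mink_comm (x y : Fin (n + 1) → ℝ) : mink x y = mink y x := by
  simp [mink, mul_comm]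

theorem mink_add_right (x y z : Fin (n + 1) → ℝ) : mink x (y + z) = mink x y + mink x z := by
  simp only [mink, Pi.add_apply, mul_add, Finset.sum_add_distrib]; ring

theorem mink_smul_right (c : ℝ) (x y : Fin (n + 1) → ℝ) : mink x (c • y) = c * mink x y := by
  simp only [mink, Pi.smul_apply, smul_eq_mul, mul_add, Finset.mul_sum]
  congr 1
  · ring
  · exact Finset.sum_congr rfl fun _ _ => by ring

theorem mink_add_left (x y z : Fin (n + 1) → ℝ) : mink (x + y) z = mink x z + mink y z := by
  rw [mink_comm, mink_add_right, mink_comm z x, mink_comm z y]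

theorem mink_smul_left (c : ℝ) (x y : Fin (n + 1) → ℝ) : mink (c • x) y = c * mink x y := by
  rw [mink_comm, mink_smul_right, mink_comm]

theorem mink_neg_right (x y : Fin (n + 1) → ℝ) : mink x (-y) = -mink x y := by
  rw [← neg_one_smul ℝ y, mink_smul_right]; ring

theorem mink_neg_left (x y : Fin (n + 1) → ℝ) : mink (-x) y = -mink x y := by
  rw [mink_comm, mink_neg_right, mink_comm]

theorem mink_sub_right (x y z : Fin (n + 1) → ℝ) : mink x (y - z) = mink x y - mink x z := by
  rw [sub_eq_add_neg, mink_add_right, mink_neg_right]; ring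

theorem mink_sub_left (x y z : Fin (n + 1) → ℝ) : mink (x - y) z = mink x z - mink y z := by
  rw [mink_comm, mink_sub_right, mink_comm z x, mink_comm z y]

theorem mink_zero_right (x : Fin (n + 1) → ℝ) : mink x 0 = 0 := by simp [mink]

theorem mink_zero_left (x : Fin (n + 1) → ℝ) : mink 0 x = 0 := by simp [mink]

/-- The Minkowski form as a bilinear map. -/
def minkB (n : ℕ) : (Fin (n + 1) → ℝ) →ₗ[ℝ] (Fin (n + 1) → ℝ) →ₗ[ℝ] ℝ :=
  LinearMap.mk₂ ℝ mink mink_add_left mink_smul_left mink_add_right mink_smul_right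

theorem continuous_mink_right (x : Fin (n + 1) → ℝ) : Continuous (mink x) := by
  unfold mink; fun_prop

theorem mink_sum_right {κ : Type*} (s : Finset κ) (x : Fin (n + 1) → ℝ)
    (f : κ → Fin (n + 1) → ℝ) : mink x (∑ k ∈ s, f k) = ∑ k ∈ s, mink x (f k) :=
  map_sum (minkB n x) f s

/-- A vector orthogonal to a nonzero causal vector is spacelike or null. -/
theorem mink_self_nonneg_of_orthogonal {u v : Fin (n + 1) → ℝ} (hv : mink v v ≤ 0) (hv0 : v ≠ 0)
    (huv : mink u v = 0) : 0 ≤ mink u u := by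
  have hcs := Finset.sum_mul_sq_le_sq_mul_sq Finset.univ (fun i : Fin n => u i.succ)
    (fun i : Fin n => v i.succ)
  simp only [mink, ← pow_two] at *
  set a := ∑ i : Fin n, u i.succ ^ 2
  set b := ∑ i : Fin n, v i.succ ^ 2 with hb
  have hb0 : 0 ≤ b := by positivity
  have ha0 : 0 ≤ a := by positivity
  have hvpos : 0 < v 0 ^ 2 := by
    by_contra hcon
    have h0 : v 0 ^ 2 = 0 := le_antisymm (not_lt.mp hcon) (sq_nonneg _)
    have hbz : b = 0 := by linarith
    apply hv0
    rw [hb, Finset.sum_eq_zero_iff_of_nonneg (fun _ _ => sq_nonneg _)] at hbz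
    funext i
    refine Fin.cases ?_ (fun j => ?_) i
    · simpa using h0
    · simpa using hbz j (Finset.mem_univ _)
  have h1 : ∑ i : Fin n, u i.succ * v i.succ = u 0 * v 0 := by linarith
  rw [h1] at hcs
  have h2 : u 0 ^ 2 * v 0 ^ 2 ≤ a * v 0 ^ 2 := by
    calc u 0 ^ 2 * v 0 ^ 2 = (u 0 * v 0) ^ 2 := by ring
      _ ≤ a * b := hcs
      _ ≤ a * v 0 ^ 2 := by gcongr; linarith
  have := le_of_mul_le_mul_right h2 hvpos
  linarith

theorem coord_zero_ne_zero_of_causal {v : Fin (n + 1) → ℝ} (hv : mink v v ≤ 0) (hv0 : v ≠ 0) :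
    v 0 ≠ 0 := by
  intro h0
  apply hv0
  have hs : ∑ i : Fin n, v i.succ ^ 2 = 0 := by
    refine le_antisymm ?_ (by positivity)
    simpa [mink, h0, ← pow_two] using hv
  rw [Finset.sum_eq_zero_iff_of_nonneg (fun _ _ => sq_nonneg _)] at hs
  funext i
  refine Fin.cases h0 (fun j => ?_) i
  simpa using hs j (Finset.mem_univ _)

/-- A nonspacelike vector orthogonal to a nonzero causal vector `v` is a multiple of `v`. -/
theorem exists_eq_smul_of_orthogonal {u v : Fin (n + 1) → ℝ} (hv : mink v v ≤ 0) (hv0 : v ≠ 0)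
    (huv : mink u v = 0) (hu : mink u u ≤ 0) : ∃ c : ℝ, u = c • v := by
  have hv00 := coord_zero_ne_zero_of_causal hv hv0
  refine ⟨u 0 / v 0, ?_⟩
  set c := u 0 / v 0 with hc
  have hw0 : (u - c • v) 0 = 0 := by
    simp only [Pi.sub_apply, Pi.smul_apply, smul_eq_mul, hc]
    field_simp
    ring
  by_contra hne
  have hwne : u - c • v ≠ 0 := sub_ne_zero.mpr hne
  have hle : mink (u - c • v) (u - c • v) ≤ 0 := by
    simp only [mink_sub_left, mink_sub_right, mink_smul_left, mink_smul_right, huv,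
      mink_comm v u]
    nlinarith [sq_nonneg c]
  exact coord_zero_ne_zero_of_causal hle hwne hw0

/-- The orthogonal complement of a timelike vector is positive definite. -/
theorem mink_self_pos_of_orthogonal {u v : Fin (n + 1) → ℝ} (hv : mink v v < 0) (hu0 : u ≠ 0)
    (huv : mink u v = 0) : 0 < mink u u := by
  have hv0 : v ≠ 0 := by rintro rfl; simp [mink_zero_left] at hv
  by_contra hcon
  obtain ⟨c, rfl⟩ := exists_eq_smul_of_orthogonal hv.le hv0 huv (not_lt.mp hcon)
  rw [mink_smul_left] at huv
  rcases mul_eq_zero.mp huv with h | h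
  · simp [h] at hu0
  · linarith

/-- Future-directed causal vectors have nonpositive product. -/
theorem mink_nonpos_of_causal {u v : Fin (n + 1) → ℝ} (hu : mink u u ≤ 0) (hv : mink v v ≤ 0)
    (hu0 : 0 < u 0) (hv0 : 0 < v 0) : mink u v ≤ 0 := by
  have hcs := Finset.sum_mul_sq_le_sq_mul_sq Finset.univ (fun i : Fin n => u i.succ)
    (fun i : Fin n => v i.succ)
  simp only [mink, ← pow_two] at *
  have h1 : (∑ i : Fin n, u i.succ * v i.succ) ^ 2 ≤ (u 0 * v 0) ^ 2 := by
    refine hcs.trans ?_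
    rw [mul_pow]
    have : 0 ≤ ∑ i : Fin n, v i.succ ^ 2 := by positivity
    gcongr <;> linarith
  have := abs_le_of_sq_le_sq h1 (by positivity)
  linarith [le_abs_self (∑ i : Fin n, u i.succ * v i.succ)]

/-- An orthogonal family of non-null vectors has at most `n + 1` members. -/
theorem card_le_of_orthogonal {κ : Type*} [Fintype κ] (f : κ → Fin (n + 1) → ℝ)
    (hne : ∀ a, mink (f a) (f a) ≠ 0) (hortho : ∀ a b, a ≠ b → mink (f a) (f b) = 0) :
    Fintype.card κ ≤ n + 1 := by
  have hli : LinearIndependent ℝ f := by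
    rw [linearIndependent_iff']
    intro s g hg a ha
    have h := congrArg (mink (f a)) hg
    rw [mink_sum_right, mink_zero_right, Finset.sum_eq_single a] at h
    · rw [mink_smul_right] at h
      exact (mul_eq_zero.mp h).resolve_right (hne a)
    · intro b _ hb
      rw [mink_smul_right, hortho a b hb.symm, mul_zero]
    · exact fun h => absurd ha h
  simpa using hli.fintype_card_le_finrank

/-- Fewer than `n + 1` linear conditions have a nonzero common solution. -/
theorem exists_ne_zero_of_card_lt {κ : Type*} [Fintype κ]
    (f : κ → (Fin (n + 1) → ℝ) →ₗ[ℝ] ℝ) (hκ : Fintype.card κ < n + 1) :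
    ∃ u, u ≠ 0 ∧ ∀ a, f a u = 0 := by
  have h := LinearMap.ker_ne_bot_of_finrank_lt (f := LinearMap.pi f) (by simpa using hκ)
  obtain ⟨u, hu, hu0⟩ := Submodule.exists_mem_ne_zero_of_ne_bot h
  exact ⟨u, hu0, fun a => congrFun (LinearMap.mem_ker.mp hu) a⟩

end Minkowski

/-! ### Right-angled systems of unit normals -/

open Classical in
/-- The outer unit normals `e i` of a finite-volume right-angled polyhedron in `ℍ⁶`, together with
an interior point `p` and the finite set `V` of extreme rays of the cone over the polyhedron,
normalised by `v 0 = 1`. -/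
structure RightAngledSystem (ι : Type) [Fintype ι] where
  e : ι → Fin (6 + 1) → ℝ
  V : Finset (Fin (6 + 1) → ℝ)
  p : Fin (6 + 1) → ℝ
  unit : ∀ i, mink (e i) (e i) = 1
  gram : ∀ i j, i ≠ j → mink (e i) (e j) = 0 ∨ mink (e i) (e j) ≤ -1
  p_neg : ∀ i, mink (e i) p < 0
  p_time : mink p p < 0
  causal : ∀ x, (∀ i, mink (e i) x ≤ 0) → x ≠ 0 → 0 < x 0 ∧ mink x x ≤ 0
  V_zero : ∀ v ∈ V, v 0 = 1
  V_mem : ∀ v ∈ V, ∀ i, mink (e i) v ≤ 0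
  V_gen : ∀ x, (∀ i, mink (e i) x ≤ 0) →
    ∃ a : (Fin (6 + 1) → ℝ) → ℝ, (∀ v, 0 ≤ a v) ∧ x = ∑ v ∈ V, a v • v
  V_ext : ∀ v ∈ V, ∀ u, (∀ i, mink (e i) (v + u) ≤ 0) → (∀ i, mink (e i) (v - u) ≤ 0) →
    ∃ c : ℝ, u = c • v

namespace RightAngledSystem

open scoped Classical

variable {ι : Type} [Fintype ι] (R : RightAngledSystem ι)

/-- The linear cone over the polyhedron. -/
def cone : Set (Fin (6 + 1) → ℝ) := {x | ∀ i, mink (R.e i) x ≤ 0}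

/-- A set of pairwise orthogonal facets. -/
def Clq (S : Finset ι) : Prop := ∀ i ∈ S, ∀ j ∈ S, i ≠ j → mink (R.e i) (R.e j) = 0

/-- The facets through a point. -/
def act (v : Fin (6 + 1) → ℝ) : Finset ι := Finset.univ.filter fun i => mink (R.e i) v = 0

@[simp] theorem mem_act {v : Fin (6 + 1) → ℝ} {i : ι} : i ∈ R.act v ↔ mink (R.e i) v = 0 := by
  simp [act]

theorem gram_nonpos {i j : ι} (h : i ≠ j) : mink (R.e i) (R.e j) ≤ 0 := by
  rcases R.gram i j h with h | h <;> linarith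

theorem ne_of_orthogonal {i j : ι} (h : mink (R.e i) (R.e j) = 0) : i ≠ j := by
  rintro rfl
  rw [R.unit] at h
  norm_num at h

theorem add_ne_zero (i j : ι) : R.e i + R.e j ≠ 0 := by
  intro h
  have h1 : mink (R.e i + R.e j) R.p = 0 := by rw [h, mink_zero_left]
  rw [mink_add_left] at h1
  linarith [R.p_neg i, R.p_neg j]

theorem vertex_ne_zero {v : Fin (6 + 1) → ℝ} (hv : v ∈ R.V) : v ≠ 0 := by
  rintro rfl
  simpa using R.V_zero _ hv

theorem vertex_causal {v : Fin (6 + 1) → ℝ} (hv : v ∈ R.V) : mink v v ≤ 0 :=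
  (R.causal v (R.V_mem v hv) (R.vertex_ne_zero hv)).2

variable {R}

theorem Clq.mono {S T : Finset ι} (hT : R.Clq T) (h : S ⊆ T) : R.Clq S :=
  fun i hi j hj => hT i (h hi) j (h hj)

theorem Clq.insert {S : Finset ι} (hS : R.Clq S) {i : ι}
    (hi : ∀ j ∈ S, mink (R.e j) (R.e i) = 0) : R.Clq (insert i S) := by
  intro a ha b hb hab
  rcases Finset.mem_insert.mp ha with ha' | ha' <;> rcases Finset.mem_insert.mp hb with hb' | hb'
  · exact absurd (ha'.trans hb'.symm) hab
  · rw [ha', mink_comm]; exact hi b hb'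
  · rw [hb']; exact hi a ha'
  · exact hS a ha' b hb' hab

variable (R)

theorem clq_empty : R.Clq ∅ := by simp [Clq]

/-- Orthogonal projection to the hyperplane of a facet preserves the cone. -/
theorem proj_mem {x : Fin (6 + 1) → ℝ} (hx : x ∈ R.cone) (i : ι) :
    x - mink (R.e i) x • R.e i ∈ R.cone := by
  intro j
  rw [mink_sub_right, mink_smul_right]
  by_cases h : j = i
  · subst h; rw [R.unit]; linarith
  · nlinarith [hx i, hx j, R.gram_nonpos h]

theorem proj_orthogonal {x : Fin (6 + 1) → ℝ} {i j : ι} (h : mink (R.e j) x = 0)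
    (hij : mink (R.e j) (R.e i) = 0) : mink (R.e j) (x - mink (R.e i) x • R.e i) = 0 := by
  rw [mink_sub_right, mink_smul_right, h, hij]; ring

theorem proj_orthogonal_self (x : Fin (6 + 1) → ℝ) (i : ι) :
    mink (R.e i) (x - mink (R.e i) x • R.e i) = 0 := by
  rw [mink_sub_right, mink_smul_right, R.unit]; ring

theorem add_mem_cone {i j : ι} (h : mink (R.e i) (R.e j) ≤ -1) : R.e i + R.e j ∈ R.cone := by
  intro k
  have hij : i ≠ j := by rintro rfl; rw [R.unit] at h; norm_num at h
  rw [mink_add_right]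
  by_cases hi : k = i
  · subst hi; rw [R.unit]; linarith
  · by_cases hj : k = j
    · subst hj; rw [R.unit, mink_comm]; linarith
    · linarith [R.gram_nonpos hi, R.gram_nonpos hj]

/-- Every set of pairwise orthogonal facets cuts out a face with a timelike interior point. -/
theorem exists_point {S : Finset ι} (hS : R.Clq S) :
    ∃ x ∈ R.cone, mink x x < 0 ∧ R.act x = S := by
  induction S using Finset.induction_on with
  | empty =>
    refine ⟨R.p, fun i => (R.p_neg i).le, R.p_time, ?_⟩
    ext i
    simpa using (R.p_neg i).ne
  | insert i S hi ih =>
    obtain ⟨x, hx, hxx, hact⟩ := ih (hS.mono (Finset.subset_insert _ _))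
    have hmem : ∀ j, mink (R.e j) x = 0 ↔ j ∈ S := fun j => by rw [← hact, mem_act]
    refine ⟨x - mink (R.e i) x • R.e i, R.proj_mem hx i, ?_, ?_⟩
    · simp only [mink_sub_left, mink_sub_right, mink_smul_left, mink_smul_right, R.unit,
        mink_comm x (R.e i)]
      nlinarith [sq_nonneg (mink (R.e i) x)]
    · ext j
      rw [mem_act, Finset.mem_insert]
      constructor
      · intro h
        by_contra hcon
        push Not at hcon
        have h1 : mink (R.e j) x < 0 := lt_of_le_of_ne (hx j) fun h0 => hcon.2 ((hmem j).mp h0)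
        rw [mink_sub_right, mink_smul_right] at h
        nlinarith [hx i, R.gram_nonpos hcon.1]
      · rintro (rfl | hj)
        · exact R.proj_orthogonal_self x j
        · refine R.proj_orthogonal ((hmem j).mpr hj) (hS j (Finset.mem_insert_of_mem hj) i
            (Finset.mem_insert_self _ _) ?_)
          rintro rfl
          exact hi hj

/-- A point of a face is a nonnegative combination of the vertices of the face. -/
theorem exists_face_combination {x : Fin (6 + 1) → ℝ} (hx : x ∈ R.cone) :
    ∃ a : (Fin (6 + 1) → ℝ) → ℝ, (∀ v, 0 ≤ a v) ∧
      (∀ v ∈ R.V, a v ≠ 0 → R.act x ⊆ R.act v) ∧ x = ∑ v ∈ R.V, a v • v := by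
  obtain ⟨a, ha, hxa⟩ := R.V_gen x hx
  refine ⟨a, ha, fun v hv hav i hi => ?_, hxa⟩
  rw [mem_act] at hi ⊢
  rw [hxa, mink_sum_right] at hi
  have hle : ∀ w ∈ R.V, mink (R.e i) (a w • w) ≤ 0 := fun w hw => by
    rw [mink_smul_right]
    exact mul_nonpos_of_nonneg_of_nonpos (ha w) (R.V_mem w hw i)
  have := (Finset.sum_eq_zero_iff_of_nonpos hle).mp hi v hv
  rw [mink_smul_right] at this
  exact (mul_eq_zero.mp this).resolve_left hav

theorem linear_nonpos_on_face {S : Finset ι} (L : (Fin (6 + 1) → ℝ) →ₗ[ℝ] ℝ)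
    (hL : ∀ v ∈ R.V, S ⊆ R.act v → L v ≤ 0) {x : Fin (6 + 1) → ℝ} (hx : x ∈ R.cone)
    (hS : S ⊆ R.act x) : L x ≤ 0 := by
  obtain ⟨a, ha, hact, hxa⟩ := R.exists_face_combination hx
  rw [hxa, map_sum]
  refine Finset.sum_nonpos fun v hv => ?_
  rw [map_smul, smul_eq_mul]
  by_cases h : a v = 0
  · simp [h]
  · exact mul_nonpos_of_nonneg_of_nonpos (ha v) (hL v hv (hS.trans (hact v hv h)))

theorem exists_vertex {S : Finset ι} (hS : R.Clq S) : ∃ v ∈ R.V, S ⊆ R.act v := by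
  obtain ⟨x, hx, hxx, hact⟩ := R.exists_point hS
  by_contra hcon
  push Not at hcon
  have := R.linear_nonpos_on_face (S := S) (LinearMap.proj 0)
    (fun v hv h => absurd h (hcon v hv)) hx hact.ge
  have hx0 : x ≠ 0 := by rintro rfl; simp [mink_zero_left] at hxx
  have := (R.causal x hx hx0).1
  simp at *
  linarith

/-- Small displacements tangent to all active facets stay in the cone. -/
theorem eventually_add_smul_mem {v u : Fin (6 + 1) → ℝ} (hv : v ∈ R.cone)
    (hu : ∀ i ∈ R.act v, mink (R.e i) u ≤ 0) :
    ∀ᶠ t : ℝ in nhdsWithin 0 (Set.Ioi 0), v + t • u ∈ R.cone := by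
  have h : ∀ i, ∀ᶠ t : ℝ in nhdsWithin 0 (Set.Ioi 0), mink (R.e i) (v + t • u) ≤ 0 := by
    intro i
    by_cases hi : i ∈ R.act v
    · filter_upwards [self_mem_nhdsWithin] with t ht
      rw [mink_add_right, mink_smul_right, R.mem_act.mp hi, zero_add]
      exact mul_nonpos_of_nonneg_of_nonpos (le_of_lt ht) (hu i hi)
    · have hlt : mink (R.e i) v < 0 := lt_of_le_of_ne (hv i) fun h => hi (R.mem_act.mpr h)
      have hc : Continuous fun t : ℝ => mink (R.e i) (v + t • u) :=
        (continuous_mink_right _).comp (by fun_prop)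
      have := hc.tendsto 0
      simp only [zero_smul, add_zero] at this
      exact ((this.eventually (gt_mem_nhds hlt)).filter_mono nhdsWithin_le_nhds).mono
        fun t ht => ht.le
  exact Filter.eventually_all.mpr h

theorem exists_add_smul_mem {v u : Fin (6 + 1) → ℝ} (hv : v ∈ R.cone)
    (hu : ∀ i ∈ R.act v, mink (R.e i) u ≤ 0) : ∃ t : ℝ, 0 < t ∧ v + t • u ∈ R.cone := by
  obtain ⟨t, ht, ht0⟩ := ((R.eventually_add_smul_mem hv hu).and self_mem_nhdsWithin).exists
  exact ⟨t, ht0, ht⟩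

theorem card_le_six {S : Finset ι} (hS : R.Clq S) : S.card ≤ 6 := by
  obtain ⟨x, hx, hxx, hact⟩ := R.exists_point hS
  have horth : ∀ i : S, mink (R.e i) x = 0 := fun i => by
    rw [← mem_act, hact]; exact i.2
  have := card_le_of_orthogonal (κ := Option S)
    (fun o => o.elim x fun i => R.e i) ?_ ?_
  · simp only [Fintype.card_option, Fintype.card_coe] at this
    omega
  · rintro (_ | i)
    · exact hxx.ne
    · simp [R.unit]
  · rintro (_ | i) (_ | j) hij
    · exact absurd rfl hij
    · simpa [mink_comm x] using horth j
    · simpa using horth i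
    · exact hS i i.2 j j.2 fun h => hij (by rw [Subtype.ext h])

/-- The orthogonal complement of six pairwise orthogonal normals is a timelike line. -/
theorem exists_eq_smul_of_card_six {S : Finset ι} (hS : R.Clq S) (hcard : S.card = 6)
    {x z : Fin (6 + 1) → ℝ} (hxx : mink x x < 0) (hx : ∀ i ∈ S, mink (R.e i) x = 0)
    (hz : ∀ i ∈ S, mink (R.e i) z = 0) : ∃ c : ℝ, z = c • x := by
  refine ⟨mink z x / mink x x, ?_⟩
  by_contra hne
  set w := z - (mink z x / mink x x) • x with hw
  have hw0 : w ≠ 0 := sub_ne_zero.mpr hne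
  have hwx : mink w x = 0 := by
    rw [hw, mink_sub_left, mink_smul_left]
    field_simp [hxx.ne]
    ring
  have hww := mink_self_pos_of_orthogonal hxx hw0 hwx
  have hwS : ∀ i ∈ S, mink (R.e i) w = 0 := fun i hi => by
    rw [hw, mink_sub_right, mink_smul_right, hz i hi, hx i hi]; ring
  have := card_le_of_orthogonal (κ := Option (Option S))
    (fun o => o.elim x fun o => o.elim w fun i => R.e i) ?_ ?_
  · simp [hcard] at this
  · rintro (_ | _ | i)
    · exact hxx.ne
    · exact hww.ne'
    · simp [R.unit]
  · rintro (_ | _ | i) (_ | _ | j) hij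
    · exact absurd rfl hij
    · simpa [mink_comm x] using hwx
    · simpa [mink_comm x] using hx j j.2
    · simpa using hwx
    · exact absurd rfl hij
    · simpa [mink_comm w] using hwS j j.2
    · simpa using hx i i.2
    · simpa using hwS i i.2
    · exact hS i i.2 j j.2 fun h => hij (by rw [Subtype.ext h])

/-- A null vector is not orthogonal to six pairwise orthogonal normals. -/
theorem card_ne_six_of_null {S : Finset ι} (hS : R.Clq S) {v : Fin (6 + 1) → ℝ} (hv0 : v ≠ 0)
    (hvv : mink v v = 0) (hv : S ⊆ R.act v) : S.card ≠ 6 := by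
  intro hcard
  obtain ⟨x, hx, hxx, hact⟩ := R.exists_point hS
  obtain ⟨c, rfl⟩ := R.exists_eq_smul_of_card_six hS hcard hxx
    (fun i hi => R.mem_act.mp (hact.ge hi)) (fun i hi => R.mem_act.mp (hv hi))
  rw [mink_smul_left, mink_smul_right] at hvv
  have : c ≠ 0 := by rintro rfl; simp at hv0
  have : c * (c * mink x x) ≠ 0 := by simp [this, hxx.ne]
  exact this hvv

/-- On an edge ending in the null vector `v`, every vector is a combination of `v` and any
timelike vector of the edge. -/
theorem exists_combination_of_card_five {S : Finset ι} (hS : R.Clq S) (hcard : S.card = 5)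
    {x v z : Fin (6 + 1) → ℝ} (hxx : mink x x < 0) (hx : ∀ i ∈ S, mink (R.e i) x = 0)
    (hvv : mink v v = 0) (hv0 : v ≠ 0) (hv : ∀ i ∈ S, mink (R.e i) v = 0)
    (hz : ∀ i ∈ S, mink (R.e i) z = 0) : ∃ α β : ℝ, z = α • x + β • v := by
  set y := v - (mink v x / mink x x) • x with hy
  have hyx : mink y x = 0 := by
    rw [hy, mink_sub_left, mink_smul_left]
    field_simp [hxx.ne]
    ring
  have hy0 : y ≠ 0 := by
    intro h0
    have hvx : v = (mink v x / mink x x) • x := sub_eq_zero.mp h0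
    set c := mink v x / mink x x
    rw [hvx, mink_smul_left, mink_smul_right] at hvv
    have : c ≠ 0 := by
      intro h; rw [h] at hvx; simp [hvx] at hv0
    have : c * (c * mink x x) ≠ 0 := by simp [this, hxx.ne]
    exact this hvv
  have hyy := mink_self_pos_of_orthogonal hxx hy0 hyx
  have hyS : ∀ i ∈ S, mink (R.e i) y = 0 := fun i hi => by
    rw [hy, mink_sub_right, mink_smul_right, hv i hi, hx i hi]; ring
  have hzw : z = (mink z x / mink x x) • x + (mink z y / mink y y) • y := by
    by_contra hne
    set w := z - ((mink z x / mink x x) • x + (mink z y / mink y y) • y) with hw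
    have hw0 : w ≠ 0 := sub_ne_zero.mpr hne
    have hwx : mink w x = 0 := by
      rw [hw, mink_sub_left, mink_add_left, mink_smul_left, mink_smul_left, hyx]
      field_simp [hxx.ne]
      ring
    have hwy : mink w y = 0 := by
      rw [hw, mink_sub_left, mink_add_left, mink_smul_left, mink_smul_left, mink_comm x y, hyx]
      field_simp [hyy.ne']
      ring
    have hww := mink_self_pos_of_orthogonal hxx hw0 hwx
    have hwS : ∀ i ∈ S, mink (R.e i) w = 0 := fun i hi => by
      rw [hw, mink_sub_right, mink_add_right, mink_smul_right, mink_smul_right, hz i hi, hx i hi,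
        hyS i hi]
      ring
    have := card_le_of_orthogonal (κ := Option (Option (Option S)))
      (fun o => o.elim x fun o => o.elim y fun o => o.elim w fun i => R.e i) ?_ ?_
    · simp [hcard] at this
    · rintro (_ | _ | _ | i)
      · exact hxx.ne
      · exact hyy.ne'
      · exact hww.ne'
      · simp [R.unit]
    · rintro (_ | _ | _ | i) (_ | _ | _ | j) hij
      · exact absurd rfl hij
      · simpa [mink_comm x] using hyx
      · simpa [mink_comm x] using hwx
      · simpa [mink_comm x] using hx j j.2
      · simpa using hyx
      · exact absurd rfl hij
      · simpa [mink_comm y] using hwy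
      · simpa [mink_comm y] using hyS j j.2
      · simpa using hwx
      · simpa using hwy
      · exact absurd rfl hij
      · simpa [mink_comm w] using hwS j j.2
      · simpa using hx i i.2
      · simpa using hyS i i.2
      · simpa using hwS i i.2
      · exact hS i i.2 j j.2 fun h => hij (by rw [Subtype.ext h])
  refine ⟨mink z x / mink x x - mink z y / mink y y * (mink v x / mink x x),
    mink z y / mink y y, ?_⟩
  rw [hy] at hzw
  refine hzw.trans ?_
  rw [← hy]
  module

end RightAngledSystem

namespace RightAngledSystem

open scoped Classical

variable {ι : Type} [Fintype ι] (R : RightAngledSystem ι)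

/-! ### Facets through a vertex -/

/-- The facets orthogonal to all members of `S`. -/
def nbr (S : Finset ι) : Finset ι := Finset.univ.filter fun i => ∀ j ∈ S, mink (R.e j) (R.e i) = 0

@[simp] theorem mem_nbr {S : Finset ι} {i : ι} :
    i ∈ R.nbr S ↔ ∀ j ∈ S, mink (R.e j) (R.e i) = 0 := by
  simp [nbr]

theorem notMem_of_mem_nbr {S : Finset ι} {i : ι} (h : i ∈ R.nbr S) : i ∉ S :=
  fun hi => R.ne_of_orthogonal (R.mem_nbr.mp h i hi) rfl

theorem clq_insert_of_mem_nbr {S : Finset ι} (hS : R.Clq S) {i : ι} (h : i ∈ R.nbr S) :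
    R.Clq (insert i S) :=
  hS.insert (R.mem_nbr.mp h)

/-- The ideal vertices. -/
def ideals : Finset (Fin (6 + 1) → ℝ) := R.V.filter fun v => mink v v = 0

@[simp] theorem mem_ideals {v : Fin (6 + 1) → ℝ} : v ∈ R.ideals ↔ v ∈ R.V ∧ mink v v = 0 := by
  simp [ideals]

theorem add_orthogonal {v : Fin (6 + 1) → ℝ} {i j : ι} (hi : i ∈ R.act v) (hj : j ∈ R.act v) :
    mink (R.e i + R.e j) v = 0 := by
  rw [mink_add_left, R.mem_act.mp hi, R.mem_act.mp hj, add_zero]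

theorem add_self (i j : ι) :
    mink (R.e i + R.e j) (R.e i + R.e j) = 2 + 2 * mink (R.e i) (R.e j) := by
  simp only [mink_add_left, mink_add_right, R.unit, mink_comm (R.e j) (R.e i)]; ring

theorem clq_act_of_timelike {v : Fin (6 + 1) → ℝ} (hvv : mink v v < 0) : R.Clq (R.act v) := by
  intro i hi j hj hij
  refine (R.gram i j hij).resolve_right fun h => ?_
  have := mink_self_pos_of_orthogonal hvv (R.add_ne_zero i j) (R.add_orthogonal hi hj)
  rw [R.add_self] at this
  linarith

theorem card_act_of_timelike {v : Fin (6 + 1) → ℝ} (hv : v ∈ R.V) (hvv : mink v v < 0) :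
    (R.act v).card = 6 := by
  refine le_antisymm (R.card_le_six (R.clq_act_of_timelike hvv)) ?_
  by_contra hlt
  obtain ⟨u, hu0, hu⟩ := exists_ne_zero_of_card_lt (n := 6) (κ := Option (R.act v))
    (fun o => o.elim (minkB 6 v) fun i => minkB 6 (R.e i)) (by
      rw [Fintype.card_option, Fintype.card_coe]; omega)
  have huv : mink v u = 0 := hu none
  have hua : ∀ i ∈ R.act v, mink (R.e i) u = 0 := fun i hi => hu (some ⟨i, hi⟩)
  have h1 := R.eventually_add_smul_mem (R.V_mem v hv) fun i hi => (hua i hi).le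
  have h2 := R.eventually_add_smul_mem (u := -u) (R.V_mem v hv) fun i hi => by
    rw [mink_neg_right, hua i hi, neg_zero]
  obtain ⟨t, ⟨ht1, ht2⟩, ht0⟩ := ((h1.and h2).and self_mem_nhdsWithin).exists
  obtain ⟨c, hc⟩ := R.V_ext v hv (t • u) ht1 (by rwa [smul_neg, ← sub_eq_add_neg] at ht2)
  have h3 : mink v (t • u) = c * mink v v := by rw [hc, mink_smul_right]
  rw [mink_smul_right, huv, mul_zero] at h3
  have hc0 : c = 0 := by
    rcases mul_eq_zero.mp h3.symm with h | h
    · exact h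
    · linarith
  rw [hc0, zero_smul] at hc
  rcases smul_eq_zero.mp hc with h | h
  · exact (ne_of_gt ht0) h
  · exact hu0 h

variable {R} in
/-- Non-orthogonal facets through an ideal vertex are parallel there. -/
theorem parallel_of_not_orthogonal {v : Fin (6 + 1) → ℝ} (hv : v ∈ R.ideals) {i j : ι}
    (hi : i ∈ R.act v) (hj : j ∈ R.act v) (hij : i ≠ j) (h : mink (R.e i) (R.e j) ≠ 0) :
    mink (R.e i) (R.e j) = -1 ∧ ∃ c : ℝ, c ≠ 0 ∧ R.e i + R.e j = c • v := by
  rw [mem_ideals] at hv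
  have hle := (R.gram i j hij).resolve_left h
  have hv0 := R.vertex_ne_zero hv.1
  have hnn := mink_self_nonneg_of_orthogonal hv.2.le hv0 (R.add_orthogonal hi hj)
  rw [R.add_self] at hnn
  obtain ⟨c, hc⟩ := exists_eq_smul_of_orthogonal hv.2.le hv0 (R.add_orthogonal hi hj)
    (by rw [R.add_self]; linarith)
  refine ⟨by linarith, c, ?_, hc⟩
  rintro rfl
  rw [zero_smul] at hc
  exact R.add_ne_zero i j hc

theorem exists_opposite {v : Fin (6 + 1) → ℝ} (hv : v ∈ R.ideals) {i : ι} (hi : i ∈ R.act v) :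
    ∃ j ∈ R.act v, mink (R.e i) (R.e j) = -1 := by
  by_contra hcon
  push Not at hcon
  have hv' := R.mem_ideals.mp hv
  have horth : ∀ j ∈ R.act v, j ≠ i → mink (R.e i) (R.e j) = 0 := fun j hj hji => by
    by_contra h
    exact hcon j hj (parallel_of_not_orthogonal hv hi hj hji.symm h).1
  obtain ⟨t, ht, hmem⟩ := R.exists_add_smul_mem (v := v) (u := -R.e i) (R.V_mem v hv'.1)
    fun j hj => by
      rw [mink_neg_right]
      by_cases h : j = i
      · rw [h, R.unit]; norm_num
      · rw [mink_comm, horth j hj h, neg_zero]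
  have hiv : mink (R.e i) v = 0 := R.mem_act.mp hi
  have hnorm : mink (v + t • -R.e i) (v + t • -R.e i) = t ^ 2 := by
    simp only [mink_add_left, mink_add_right, mink_smul_left, mink_smul_right, mink_neg_left,
      mink_neg_right, R.unit, hiv, mink_comm v (R.e i), hv'.2]
    ring
  have hne : v + t • -R.e i ≠ 0 := by
    intro h
    rw [h, mink_zero_left] at hnorm
    have : 0 < t ^ 2 := by positivity
    linarith
  have h1 := (R.causal _ hmem hne).2
  have : 0 < t ^ 2 := by positivity
  linarith

/-- The facet parallel to `i` at the ideal vertex `v`. -/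
def opp (v : Fin (6 + 1) → ℝ) (i : ι) : ι :=
  if h : ∃ j ∈ R.act v, mink (R.e i) (R.e j) = -1 then h.choose else i

theorem opp_spec {v : Fin (6 + 1) → ℝ} (hv : v ∈ R.ideals) {i : ι} (hi : i ∈ R.act v) :
    R.opp v i ∈ R.act v ∧ mink (R.e i) (R.e (R.opp v i)) = -1 := by
  have h := R.exists_opposite hv hi
  rw [opp, dif_pos h]
  exact h.choose_spec

theorem opp_ne {v : Fin (6 + 1) → ℝ} (hv : v ∈ R.ideals) {i : ι} (hi : i ∈ R.act v) :
    i ≠ R.opp v i := by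
  intro h
  have := (R.opp_spec hv hi).2
  rw [← h, R.unit] at this
  norm_num at this

theorem add_opp {v : Fin (6 + 1) → ℝ} (hv : v ∈ R.ideals) {i : ι} (hi : i ∈ R.act v) :
    ∃ c : ℝ, c ≠ 0 ∧ R.e i + R.e (R.opp v i) = c • v :=
  (parallel_of_not_orthogonal hv hi (R.opp_spec hv hi).1 (R.opp_ne hv hi)
    (by rw [(R.opp_spec hv hi).2]; norm_num)).2

theorem eq_of_both_parallel {v : Fin (6 + 1) → ℝ} (hv : v ∈ R.ideals) {i j k : ι} {c d : ℝ}
    (hi : i ∈ R.act v) (hj : R.e i + R.e j = c • v) (hk : R.e i + R.e k = d • v) : j = k := by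
  by_contra hjk
  have hle := R.gram_nonpos hjk
  rw [eq_sub_of_add_eq' hj, eq_sub_of_add_eq' hk] at hle
  simp only [mink_sub_left, mink_sub_right, mink_smul_left, mink_smul_right, R.unit,
    mink_comm v (R.e i), R.mem_act.mp hi, (R.mem_ideals.mp hv).2] at hle
  norm_num at hle

theorem eq_opp {v : Fin (6 + 1) → ℝ} (hv : v ∈ R.ideals) {i j : ι}
    (hi : i ∈ R.act v) (hj : j ∈ R.act v) (hij : i ≠ j) (h : mink (R.e i) (R.e j) ≠ 0) :
    j = R.opp v i := by
  obtain ⟨c, -, hc⟩ := (parallel_of_not_orthogonal hv hi hj hij h).2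
  obtain ⟨d, -, hd⟩ := R.add_opp hv hi
  exact R.eq_of_both_parallel hv hi hc hd

/-- A normal orthogonal to both `i` and `v` is orthogonal to the facet parallel to `i`. -/
theorem orthogonal_opp {v u : Fin (6 + 1) → ℝ} (hv : v ∈ R.ideals) {i : ι} (hi : i ∈ R.act v)
    (hu : mink u v = 0) (hui : mink u (R.e i) = 0) : mink u (R.e (R.opp v i)) = 0 := by
  obtain ⟨c, -, hc⟩ := R.add_opp hv hi
  rw [eq_sub_of_add_eq' hc, mink_sub_right, mink_smul_right, hu, hui]; ring

theorem card_le_five {v : Fin (6 + 1) → ℝ} (hv : v ∈ R.ideals) {S : Finset ι} (hS : R.Clq S)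
    (hSv : S ⊆ R.act v) : S.card ≤ 5 := by
  have hv' := R.mem_ideals.mp hv
  have h1 := R.card_le_six hS
  have h2 := R.card_ne_six_of_null hS (R.vertex_ne_zero hv'.1) hv'.2 hSv
  omega

theorem exists_mem_nbr_of_ideal {v : Fin (6 + 1) → ℝ} (hv : v ∈ R.ideals) {S : Finset ι}
    (hSv : S ⊆ R.act v) (hcard : S.card < 5) : (R.act v ∩ R.nbr S).Nonempty := by
  by_contra hcon
  rw [Finset.not_nonempty_iff_eq_empty] at hcon
  have hv' := R.mem_ideals.mp hv
  obtain ⟨u, hu0, hu⟩ := exists_ne_zero_of_card_lt (n := 6) (κ := Option (Option S))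
    (fun o => o.elim (minkB 6 v) fun o => o.elim (LinearMap.proj 0) fun i => minkB 6 (R.e i)) (by
      rw [Fintype.card_option, Fintype.card_option, Fintype.card_coe]; omega)
  have huv : mink v u = 0 := hu none
  have hu00 : u 0 = 0 := hu (some none)
  have huS : ∀ i ∈ S, mink (R.e i) u = 0 := fun i hi => hu (some (some ⟨i, hi⟩))
  have hua : ∀ i ∈ R.act v, mink (R.e i) u = 0 := by
    intro i hi
    have hni : i ∉ R.nbr S := fun h => by
      have : i ∈ R.act v ∩ R.nbr S := Finset.mem_inter.mpr ⟨hi, h⟩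
      simp [hcon] at this
    rw [mem_nbr] at hni
    push Not at hni
    obtain ⟨j, hj, hji⟩ := hni
    by_cases h : j = i
    · rw [← h]; exact huS j hj
    · rw [R.eq_opp hv (hSv hj) hi h hji, mink_comm]
      exact R.orthogonal_opp hv (hSv hj) (by rwa [mink_comm]) (by rw [mink_comm]; exact huS j hj)
  obtain ⟨t, ht, hmem⟩ := R.exists_add_smul_mem (R.V_mem v hv'.1) fun i hi => (hua i hi).le
  have hnorm : mink (v + t • u) (v + t • u) = t ^ 2 * mink u u := by
    simp only [mink_add_left, mink_add_right, mink_smul_left, mink_smul_right, huv, hv'.2,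
      mink_comm u v]
    ring
  have h0 : (v + t • u) 0 = 1 := by simp [hu00, R.V_zero v hv'.1]
  have hne : v + t • u ≠ 0 := by
    intro h
    rw [h] at h0
    norm_num at h0
  have h1 := (R.causal _ hmem hne).2
  have huu : mink u u ≤ 0 := by
    by_contra h
    push Not at h
    have : 0 < t ^ 2 * mink u u := by positivity
    linarith
  exact coord_zero_ne_zero_of_causal huu hu0 hu00

theorem card_act_eq_add {v : Fin (6 + 1) → ℝ} (hv : v ∈ R.ideals) {S : Finset ι}
    (hS : R.Clq S) (hSv : S ⊆ R.act v) :
    (R.act v).card = (R.act v ∩ R.nbr S).card + 2 * S.card := by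
  have hinj : Set.InjOn (R.opp v) S := by
    intro i hi j hj hij
    obtain ⟨c, -, hc⟩ := R.add_opp hv (hSv hi)
    obtain ⟨d, -, hd⟩ := R.add_opp hv (hSv hj)
    rw [← hij] at hd
    exact R.eq_of_both_parallel hv (R.opp_spec hv (hSv hi)).1 ((add_comm _ _).trans hc)
      ((add_comm _ _).trans hd)
  have hunion : R.act v = (R.act v ∩ R.nbr S) ∪ (S ∪ S.image (R.opp v)) := by
    ext i
    simp only [Finset.mem_union, Finset.mem_inter, Finset.mem_image]
    constructor
    · intro hi
      by_cases hn : i ∈ R.nbr S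
      · exact Or.inl ⟨hi, hn⟩
      · rw [mem_nbr] at hn
        push Not at hn
        obtain ⟨j, hj, hji⟩ := hn
        by_cases h : j = i
        · exact Or.inr (Or.inl (h ▸ hj))
        · exact Or.inr (Or.inr ⟨j, hj, (R.eq_opp hv (hSv hj) hi h hji).symm⟩)
    · rintro (h | h | ⟨j, hj, rfl⟩)
      · exact h.1
      · exact hSv h
      · exact (R.opp_spec hv (hSv hj)).1
  have hd1 : Disjoint S (S.image (R.opp v)) := by
    rw [Finset.disjoint_left]
    intro i hi hi'
    obtain ⟨j, hj, rfl⟩ := Finset.mem_image.mp hi'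
    have h1 := hS j hj _ hi (R.opp_ne hv (hSv hj))
    rw [(R.opp_spec hv (hSv hj)).2] at h1
    norm_num at h1
  have hd2 : Disjoint (R.act v ∩ R.nbr S) (S ∪ S.image (R.opp v)) := by
    rw [Finset.disjoint_left]
    intro i hi hi'
    have hn := (Finset.mem_inter.mp hi).2
    rcases Finset.mem_union.mp hi' with h | h
    · exact R.notMem_of_mem_nbr hn h
    · obtain ⟨j, hj, rfl⟩ := Finset.mem_image.mp h
      have h1 := R.mem_nbr.mp hn j hj
      rw [(R.opp_spec hv (hSv hj)).2] at h1
      norm_num at h1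
  rw [hunion, Finset.card_union_of_disjoint, Finset.card_union_of_disjoint hd1,
    Finset.card_image_of_injOn hinj, ← hunion]
  · ring
  · exact hd2

theorem exists_clq_of_ideal {v : Fin (6 + 1) → ℝ} (hv : v ∈ R.ideals) {k : ℕ} (hk : k ≤ 5) :
    ∃ S, R.Clq S ∧ S ⊆ R.act v ∧ S.card = k := by
  induction k with
  | zero => exact ⟨∅, R.clq_empty, by simp, rfl⟩
  | succ k ih =>
    obtain ⟨S, hS, hSv, hc⟩ := ih (by omega)
    obtain ⟨i, hi⟩ := R.exists_mem_nbr_of_ideal hv hSv (by omega)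
    rw [Finset.mem_inter] at hi
    refine ⟨insert i S, R.clq_insert_of_mem_nbr hS hi.2, Finset.insert_subset hi.1 hSv, ?_⟩
    rw [Finset.card_insert_of_notMem (R.notMem_of_mem_nbr hi.2), hc]

/-- Ten facets pass through an ideal vertex. -/
theorem card_act_of_ideal {v : Fin (6 + 1) → ℝ} (hv : v ∈ R.ideals) : (R.act v).card = 10 := by
  obtain ⟨S, hS, hSv, hc⟩ := R.exists_clq_of_ideal hv le_rfl
  have hempty : R.act v ∩ R.nbr S = ∅ := by
    by_contra h
    obtain ⟨i, hi⟩ := Finset.nonempty_iff_ne_empty.mpr h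
    rw [Finset.mem_inter] at hi
    have := R.card_le_five hv (R.clq_insert_of_mem_nbr hS hi.2) (Finset.insert_subset hi.1 hSv)
    rw [Finset.card_insert_of_notMem (R.notMem_of_mem_nbr hi.2)] at this
    omega
  rw [R.card_act_eq_add hv hS hSv, hempty, hc]
  rfl

end RightAngledSystem

namespace RightAngledSystem

open scoped Classical

variable {ι : Type} [Fintype ι] (R : RightAngledSystem ι)

/-! ### The Euler relation -/

/-- The height `l` measured relative to the vertex `v`. -/
def rel (l : (Fin (6 + 1) → ℝ) →ₗ[ℝ] ℝ) (v : Fin (6 + 1) → ℝ) : (Fin (6 + 1) → ℝ) →ₗ[ℝ] ℝ :=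
  l - l v • LinearMap.proj 0

theorem rel_apply (l : (Fin (6 + 1) → ℝ) →ₗ[ℝ] ℝ) (v x : Fin (6 + 1) → ℝ) :
    rel l v x = l x - l v * x 0 := rfl

theorem rel_neg (l : (Fin (6 + 1) → ℝ) →ₗ[ℝ] ℝ) (v x : Fin (6 + 1) → ℝ) :
    rel (-l) v x = -rel l v x := by
  simp only [rel_apply, LinearMap.neg_apply]; ring

theorem rel_vertex (l : (Fin (6 + 1) → ℝ) →ₗ[ℝ] ℝ) (v : Fin (6 + 1) → ℝ) {w : Fin (6 + 1) → ℝ}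
    (hw : w ∈ R.V) : rel l v w = l w - l v := by
  rw [rel_apply, R.V_zero w hw, mul_one]

theorem rel_self (l : (Fin (6 + 1) → ℝ) →ₗ[ℝ] ℝ) {v : Fin (6 + 1) → ℝ}
    (hv : v ∈ R.V) : rel l v v = 0 := by
  rw [R.rel_vertex l v hv, sub_self]

/-- The vertex `v` is at least as high as every vertex of the face `T`. -/
def IsTop (l : (Fin (6 + 1) → ℝ) →ₗ[ℝ] ℝ) (v : Fin (6 + 1) → ℝ) (T : Finset ι) : Prop :=
  ∀ w ∈ R.V, T ⊆ R.act w → l w ≤ l v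

/-- A height function that separates the vertices and is not constant along any normal. -/
structure Generic (l : (Fin (6 + 1) → ℝ) →ₗ[ℝ] ℝ) : Prop where
  inj : ∀ v ∈ R.V, ∀ w ∈ R.V, l v = l w → v = w
  rel_ne : ∀ v ∈ R.V, ∀ i, rel l v (R.e i) ≠ 0

theorem exists_generic : ∃ l, R.Generic l := by
  obtain ⟨l, hl⟩ := Module.exists_dual_forall_apply_ne_zero (K := ℝ)
    (ι := {q : R.V × R.V // q.1 ≠ q.2} ⊕ (R.V × ι))
    (Sum.elim (fun q => (q.1.1 : Fin (6 + 1) → ℝ) - q.1.2)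
      fun q => R.e q.2 - R.e q.2 0 • (q.1 : Fin (6 + 1) → ℝ)) (by
    rintro (⟨⟨v, w⟩, h⟩ | ⟨v, i⟩)
    · exact sub_ne_zero.mpr fun h' => h (Subtype.ext h')
    · refine sub_ne_zero.mpr fun h => ?_
      have h1 := R.unit i
      rw [h, mink_smul_left, mink_smul_right] at h1
      nlinarith [R.vertex_causal v.2, mul_self_nonneg (R.e i 0)])
  refine ⟨l, fun v hv w hw h => ?_, fun v hv i h => ?_⟩
  · by_contra hne
    refine hl (Sum.inl ⟨(⟨v, hv⟩, ⟨w, hw⟩), fun h' => hne (congrArg Subtype.val h')⟩) ?_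
    simp [h]
  · refine hl (Sum.inr (⟨v, hv⟩, i)) ?_
    rw [rel_apply] at h
    simp only [Sum.elim_inr, map_sub, map_smul, smul_eq_mul]
    linarith

variable {R} in
theorem Generic.neg {l : (Fin (6 + 1) → ℝ) →ₗ[ℝ] ℝ} (hl : R.Generic l) : R.Generic (-l) := by
  refine ⟨fun v hv w hw h => hl.inj v hv w hw ?_, fun v hv i => ?_⟩
  · simpa using h
  · rw [rel_neg]
    exact neg_ne_zero.mpr (hl.rel_ne v hv i)

variable {l : (Fin (6 + 1) → ℝ) →ₗ[ℝ] ℝ} {v : Fin (6 + 1) → ℝ}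

variable {R}

theorem IsTop.rel_nonpos {T : Finset ι} (h : R.IsTop l v T) {x : Fin (6 + 1) → ℝ}
    (hx : x ∈ R.cone) (hT : T ⊆ R.act x) : rel l v x ≤ 0 :=
  R.linear_nonpos_on_face _ (fun w hw hTw => by
    rw [R.rel_vertex l v hw]; linarith [h w hw hTw]) hx hT

theorem isTop_insert {T : Finset ι} {s : ι} (hs : 0 ≤ rel l v (R.e s)) (hc : R.Clq (insert s T))
    (hsT : s ∉ T) : R.IsTop l v T ↔ R.IsTop l v (insert s T) := by
  constructor
  · exact fun h w hw hTw => h w hw ((Finset.subset_insert _ _).trans hTw)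
  · intro h w hw hTw
    have h1 := h.rel_nonpos (R.proj_mem (R.V_mem w hw) s) (fun j hj => by
      rw [mem_act]
      rcases Finset.mem_insert.mp hj with hj' | hj'
      · rw [hj']; exact R.proj_orthogonal_self w s
      · refine R.proj_orthogonal (R.mem_act.mp (hTw hj')) (hc j hj s (Finset.mem_insert_self _ _) ?_)
        rintro rfl
        exact hsT hj')
    rw [map_sub, map_smul, smul_eq_mul, R.rel_vertex l v hw] at h1
    nlinarith [R.V_mem w hw s]

theorem sum_neg_one_pow_card_eq_zero (Q : Finset ι → Prop) [DecidablePred Q] (s : ι)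
    (h : ∀ T, s ∉ T → (Q T ↔ Q (insert s T))) :
    ∑ T with Q T, (-1 : ℤ) ^ T.card = 0 := by
  refine Finset.sum_involution (fun T _ => if s ∈ T then T.erase s else insert s T) ?_ ?_ ?_ ?_
  · intro T _
    split_ifs with hs
    · rw [← Finset.card_erase_add_one hs, pow_succ]; ring
    · rw [Finset.card_insert_of_notMem hs, pow_succ]; ring
  · intro T _ _
    split_ifs with hs
    · exact fun h => (Finset.notMem_erase s T) (h.symm ▸ hs)
    · exact fun h => hs (h ▸ Finset.mem_insert_self s T)
  · intro T hT
    simp only [Finset.mem_filter, Finset.mem_univ, true_and] at hT ⊢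
    split_ifs with hs
    · exact (h _ (Finset.notMem_erase s T)).mpr (by rwa [Finset.insert_erase hs])
    · exact (h T hs).mp hT
  · intro T _
    by_cases hs : s ∈ T
    · simp [hs, Finset.insert_erase hs]
    · simp [hs]

variable (R)

/-- The contribution of the vertex `v` to the Euler characteristic of the face `S`. -/
def contrib (l : (Fin (6 + 1) → ℝ) →ₗ[ℝ] ℝ) (v : Fin (6 + 1) → ℝ) (S : Finset ι) : ℤ :=
  ∑ T with (R.Clq T ∧ S ⊆ T ∧ T ⊆ R.act v ∧ R.IsTop l v T), (-1 : ℤ) ^ T.card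

variable {R}

theorem not_isTop_of_timelike (hv : v ∈ R.V) (hvv : mink v v < 0) {i : ι} (hi : i ∈ R.act v)
    {T : Finset ι} (hT : T ⊆ R.act v) (hiT : i ∉ T) (hneg : rel l v (R.e i) < 0) :
    ¬ R.IsTop l v T := by
  intro htop
  have hK := R.clq_act_of_timelike hvv
  obtain ⟨t, ht, hmem⟩ := R.exists_add_smul_mem (v := v) (u := -R.e i) (R.V_mem v hv)
    fun j hj => by
      rw [mink_neg_right]
      by_cases h : j = i
      · rw [h, R.unit]; norm_num
      · rw [hK j hj i hi h, neg_zero]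
  have h1 := htop.rel_nonpos hmem (fun j hj => by
    have hji : j ≠ i := by rintro rfl; exact hiT hj
    rw [mem_act, mink_add_right, mink_smul_right, mink_neg_right, R.mem_act.mp (hT hj),
      hK j (hT hj) i hi hji]
    ring)
  rw [map_add, map_smul, map_neg, R.rel_self l hv, smul_eq_mul] at h1
  nlinarith

theorem contrib_of_timelike (hl : R.Generic l) (hv : v ∈ R.V) (hvv : mink v v < 0)
    {S : Finset ι} (hS : S ⊆ R.act v) :
    R.contrib l v S = if R.IsTop (-l) v S then 1 else 0 := by
  have hK := R.clq_act_of_timelike hvv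
  have hcard := R.card_act_of_timelike hv hvv
  induction hn : (R.act v \ S).card generalizing S with
  | zero =>
    have hSK : S = R.act v :=
      hS.antisymm (Finset.sdiff_eq_empty_iff_subset.mp (Finset.card_eq_zero.mp hn))
    have honly : ∀ w ∈ R.V, R.act v ⊆ R.act w → w = v := by
      intro w hw hvw
      obtain ⟨c, hc⟩ := R.exists_eq_smul_of_card_six hK hcard hvv
        (fun i hi => R.mem_act.mp hi) (fun i hi => R.mem_act.mp (hvw hi))
      have h0 := congrFun hc 0
      rw [Pi.smul_apply, R.V_zero w hw, R.V_zero v hv, smul_eq_mul, mul_one] at h0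
      rw [hc, ← h0, one_smul]
    have htop : ∀ l', R.IsTop l' v (R.act v) := fun l' w hw h => by rw [honly w hw h]
    have hfil : (Finset.univ.filter fun T => R.Clq T ∧ R.act v ⊆ T ∧ T ⊆ R.act v ∧
        R.IsTop l v T) = {R.act v} := by
      ext T
      simp only [Finset.mem_filter, Finset.mem_univ, true_and, Finset.mem_singleton]
      constructor
      · exact fun h => h.2.2.1.antisymm h.2.1
      · rintro rfl
        exact ⟨hK, subset_rfl, subset_rfl, htop l⟩
    rw [hSK, if_pos (htop _), contrib, hfil, Finset.sum_singleton, hcard]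
    norm_num
  | succ n ih =>
    obtain ⟨i, hi⟩ : (R.act v \ S).Nonempty := Finset.card_pos.mp (by omega)
    obtain ⟨hiv, hiS⟩ := Finset.mem_sdiff.mp hi
    have hins : insert i S ⊆ R.act v := Finset.insert_subset hiv hS
    rcases lt_or_gt_of_ne (hl.rel_ne v hv i) with hneg | hpos
    · have hbot : R.IsTop (-l) v S ↔ R.IsTop (-l) v (insert i S) :=
        isTop_insert (by rw [rel_neg]; linarith) (hK.mono hins) hiS
      have hE : R.contrib l v S = R.contrib l v (insert i S) := by
        refine Finset.sum_congr (Finset.filter_congr fun T _ => ?_) fun _ _ => rfl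
        constructor
        · rintro ⟨h1, h2, h3, h4⟩
          have hiT : i ∈ T := by
            by_contra hiT
            exact not_isTop_of_timelike hv hvv hiv h3 hiT hneg h4
          exact ⟨h1, Finset.insert_subset hiT h2, h3, h4⟩
        · rintro ⟨h1, h2, h3, h4⟩
          exact ⟨h1, (Finset.subset_insert _ _).trans h2, h3, h4⟩
      rw [hE, ih hins, if_congr hbot rfl rfl]
      rw [Finset.sdiff_insert, Finset.card_erase_of_mem hi, hn]
      rfl
    · rw [if_neg (not_isTop_of_timelike hv hvv hiv hS hiS (by rw [rel_neg]; linarith))]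
      refine sum_neg_one_pow_card_eq_zero _ i fun T hiT => ?_
      constructor
      · rintro ⟨-, h2, h3, h4⟩
        have h3' := Finset.insert_subset hiv h3
        exact ⟨hK.mono h3', h2.trans (Finset.subset_insert _ _), h3',
          (isTop_insert hpos.le (hK.mono h3') hiT).mp h4⟩
      · rintro ⟨h1, h2, h3, h4⟩
        exact ⟨h1.mono (Finset.subset_insert _ _), (Finset.subset_insert_iff_of_notMem hiS).mp h2,
          (Finset.subset_insert _ _).trans h3, (isTop_insert hpos.le h1 hiT).mpr h4⟩

/-- The two ends of an edge ending in an ideal vertex have different heights. -/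
theorem isTop_iff_not_isTop_neg (hl : R.Generic l) (hv : v ∈ R.ideals) {S : Finset ι}
    (hS : R.Clq S) (hSv : S ⊆ R.act v) (hcard : S.card = 5) :
    R.IsTop l v S ↔ ¬ R.IsTop (-l) v S := by
  obtain ⟨hvV, hvv⟩ := R.mem_ideals.mp hv
  have hv0 := R.vertex_ne_zero hvV
  obtain ⟨x, hx, hxx, hact⟩ := R.exists_point hS
  have hx0 : x ≠ 0 := by rintro rfl; simp [mink_zero_left] at hxx
  have hxv : mink x v < 0 := by
    refine lt_of_le_of_ne (mink_nonpos_of_causal hxx.le hvv.le (R.causal x hx hx0).1 ?_) ?_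
    · rw [R.V_zero v hvV]; norm_num
    · intro h
      have := mink_self_pos_of_orthogonal hxx hv0 (by rwa [mink_comm])
      linarith
  have hrel : ∀ w ∈ R.V, S ⊆ R.act w → ∃ α : ℝ, 0 ≤ α ∧ rel l v w = α * rel l v x := by
    intro w hw hSw
    obtain ⟨α, β, hz⟩ := R.exists_combination_of_card_five hS hcard hxx
      (fun i hi => R.mem_act.mp (hact.ge hi)) hvv hv0 (fun i hi => R.mem_act.mp (hSv hi))
      (fun i hi => R.mem_act.mp (hSw hi))
    refine ⟨α, ?_, ?_⟩
    · have h1 := mink_nonpos_of_causal (R.vertex_causal hw) hvv.le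
        (by rw [R.V_zero w hw]; norm_num) (by rw [R.V_zero v hvV]; norm_num)
      rw [hz, mink_add_left, mink_smul_left, mink_smul_left, hvv, mul_zero, add_zero] at h1
      by_contra hα
      push Not at hα
      nlinarith
    · rw [hz, map_add, map_smul, map_smul, R.rel_self l hvV, smul_eq_mul, smul_zero, add_zero]
  have hne : rel l v x ≠ 0 := by
    intro h0
    have honly : ∀ w ∈ R.V, S ⊆ R.act w → w = v := by
      intro w hw hSw
      obtain ⟨α, -, h⟩ := hrel w hw hSw
      rw [h0, mul_zero, R.rel_vertex l v hw] at h
      exact hl.inj w hw v hvV (by linarith)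
    obtain ⟨a, -, ha, hxa⟩ := R.exists_face_combination hx
    have : x = a v • v := by
      rw [hxa]
      refine Finset.sum_eq_single_of_mem v hvV fun w hw hwv => ?_
      by_contra hcon
      have haw : a w ≠ 0 := by rintro h; simp [h] at hcon
      exact hwv (honly w hw (hact.ge.trans (ha w hw haw)))
    rw [this, mink_smul_left, mink_smul_right, hvv] at hxx
    simp at hxx
  constructor
  · intro h1 h2
    have h3 := h1.rel_nonpos hx hact.ge
    have h4 := h2.rel_nonpos hx hact.ge
    rw [rel_neg] at h4
    exact hne (by linarith)
  · intro h w hw hSw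
    rcases lt_or_gt_of_ne hne with hneg | hpos
    · obtain ⟨α, hα, hr⟩ := hrel w hw hSw
      rw [R.rel_vertex l v hw] at hr
      nlinarith
    · refine absurd (fun w hw hSw => ?_) h
      obtain ⟨α, hα, hr⟩ := hrel w hw hSw
      rw [R.rel_vertex l v hw] at hr
      simp only [LinearMap.neg_apply]
      nlinarith

theorem contrib_of_ideal (hl : R.Generic l) (hv : v ∈ R.ideals) {S : Finset ι} (hS : R.Clq S)
    (hSv : S ⊆ R.act v) : R.contrib l v S + 1 = if R.IsTop (-l) v S then 1 else 0 := by
  obtain ⟨hvV, hvv⟩ := R.mem_ideals.mp hv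
  induction hn : 5 - S.card generalizing S with
  | zero =>
    have hcard : S.card = 5 := by
      have := R.card_le_five hv hS hSv
      omega
    have honly : ∀ T, R.Clq T → S ⊆ T → T ⊆ R.act v → T = S := fun T h1 h2 h3 =>
      (Finset.eq_of_subset_of_card_le h2 (by rw [hcard]; exact R.card_le_five hv h1 h3)).symm
    have hiff := isTop_iff_not_isTop_neg hl hv hS hSv hcard
    by_cases htop : R.IsTop l v S
    · have hfil : (Finset.univ.filter fun T => R.Clq T ∧ S ⊆ T ∧ T ⊆ R.act v ∧
          R.IsTop l v T) = {S} := by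
        ext T
        simp only [Finset.mem_filter, Finset.mem_univ, true_and, Finset.mem_singleton]
        constructor
        · exact fun h => honly T h.1 h.2.1 h.2.2.1
        · rintro rfl
          exact ⟨hS, subset_rfl, hSv, htop⟩
      rw [if_neg (hiff.mp htop), contrib, hfil, Finset.sum_singleton, hcard]
      norm_num
    · have hfil : (Finset.univ.filter fun T => R.Clq T ∧ S ⊆ T ∧ T ⊆ R.act v ∧
          R.IsTop l v T) = ∅ := by
        refine Finset.filter_eq_empty_iff.mpr fun T _ h => htop ?_
        rw [← honly T h.1 h.2.1 h.2.2.1]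
        exact h.2.2.2
      rw [if_pos (by_contra fun h => htop (hiff.mpr h)), contrib, hfil, Finset.sum_empty, zero_add]
  | succ n ih =>
    obtain ⟨s, hsv, hsS, hs, hs'⟩ : ∃ s ∈ R.act v, s ∈ R.nbr S ∧ 0 ≤ rel l v (R.e s) ∧
        rel l v (R.e (R.opp v s)) ≤ 0 := by
      obtain ⟨i, hi⟩ := R.exists_mem_nbr_of_ideal hv hSv (by omega)
      obtain ⟨hiv, hiS⟩ := Finset.mem_inter.mp hi
      obtain ⟨c, -, hc⟩ := R.add_opp hv hiv
      have hsum : rel l v (R.e i) + rel l v (R.e (R.opp v i)) = 0 := by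
        rw [← map_add, hc, map_smul, R.rel_self l hvV, smul_zero]
      rcases le_total 0 (rel l v (R.e i)) with h | h
      · exact ⟨i, hiv, hiS, h, by linarith⟩
      · obtain ⟨ho, hio⟩ := R.opp_spec hv hiv
        refine ⟨R.opp v i, ho, R.mem_nbr.mpr fun j hj => ?_, by linarith, ?_⟩
        · exact R.orthogonal_opp hv hiv (R.mem_act.mp (hSv hj)) (R.mem_nbr.mp hiS j hj)
        · rw [← R.eq_opp hv ho hiv (R.opp_ne hv hiv).symm (by rw [mink_comm, hio]; norm_num)]
          exact h
    obtain ⟨hov, hso⟩ := R.opp_spec hv hsv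
    have hosne := R.opp_ne hv hsv
    have hoS : R.opp v s ∈ R.nbr S := R.mem_nbr.mpr fun j hj =>
      R.orthogonal_opp hv hsv (R.mem_act.mp (hSv hj)) (R.mem_nbr.mp hsS j hj)
    have hoS' := R.notMem_of_mem_nbr hoS
    have hsS' := R.notMem_of_mem_nbr hsS
    set o := R.opp v s with ho_def
    have hcl := R.clq_insert_of_mem_nbr hS hoS
    have hbot : R.IsTop (-l) v S ↔ R.IsTop (-l) v (insert o S) :=
      isTop_insert (by rw [rel_neg]; linarith) hcl hoS'
    have hE : R.contrib l v S = R.contrib l v (insert o S) := by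
      have hzero : ∑ T with ((R.Clq T ∧ S ⊆ T ∧ T ⊆ R.act v ∧ R.IsTop l v T) ∧ ¬ o ∈ T),
          (-1 : ℤ) ^ T.card = 0 := by
        refine sum_neg_one_pow_card_eq_zero _ s fun T hsT => ?_
        constructor
        · rintro ⟨⟨h1, h2, h3, h4⟩, h5⟩
          have hc : R.Clq (insert s T) := h1.insert fun j hj => by
            by_contra hcon
            have hjs : s ≠ j := by rintro rfl; exact hsT hj
            have := R.eq_opp hv hsv (h3 hj) hjs (by rwa [mink_comm])
            exact h5 (by rw [ho_def, ← this]; exact hj)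
          refine ⟨⟨hc, h2.trans (Finset.subset_insert _ _), Finset.insert_subset hsv h3,
            (isTop_insert hs hc hsT).mp h4⟩, ?_⟩
          rw [Finset.mem_insert]
          push Not
          exact ⟨hosne.symm, h5⟩
        · rintro ⟨⟨h1, h2, h3, h4⟩, h5⟩
          exact ⟨⟨h1.mono (Finset.subset_insert _ _),
            (Finset.subset_insert_iff_of_notMem hsS').mp h2, (Finset.subset_insert _ _).trans h3,
            (isTop_insert hs h1 hsT).mpr h4⟩, fun h => h5 (Finset.mem_insert_of_mem h)⟩
      rw [contrib, ← Finset.sum_filter_add_sum_filter_not _ (fun T => o ∈ T), Finset.filter_filter,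
        Finset.filter_filter, hzero, add_zero]
      refine Finset.sum_congr (Finset.filter_congr fun T _ => ?_) fun _ _ => rfl
      rw [Finset.insert_subset_iff]
      tauto
    rw [hE, ih hcl (Finset.insert_subset hov hSv), if_congr hbot rfl rfl]
    rw [Finset.card_insert_of_notMem hoS']
    omega

theorem card_filter_isTop (hl : R.Generic l) {T : Finset ι} (hT : R.Clq T) :
    (R.V.filter fun v => T ⊆ R.act v ∧ R.IsTop l v T).card = 1 := by
  obtain ⟨v₀, hv₀, hT₀⟩ := R.exists_vertex hT
  obtain ⟨v, hv, hmax⟩ := Finset.exists_max_image (R.V.filter fun v => T ⊆ R.act v) l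
    ⟨v₀, Finset.mem_filter.mpr ⟨hv₀, hT₀⟩⟩
  obtain ⟨hvV, hTv⟩ := Finset.mem_filter.mp hv
  rw [Finset.card_eq_one]
  refine ⟨v, ?_⟩
  ext w
  simp only [Finset.mem_filter, Finset.mem_singleton]
  constructor
  · rintro ⟨hw, hTw, htop⟩
    exact hl.inj w hw v hvV (le_antisymm (hmax w (Finset.mem_filter.mpr ⟨hw, hTw⟩))
      (htop v hvV hTv))
  · rintro rfl
    exact ⟨hvV, hTv, fun w hw hTw => hmax w (Finset.mem_filter.mpr ⟨hw, hTw⟩)⟩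

variable (R)

/-- The Euler relation for the face `S` with its ideal vertices removed. -/
theorem euler_relation {S : Finset ι} (hS : R.Clq S) :
    ∑ T with (R.Clq T ∧ S ⊆ T), (-1 : ℤ) ^ T.card +
      ((R.ideals.filter fun v => S ⊆ R.act v).card : ℤ) = 1 := by
  obtain ⟨l, hl⟩ := R.exists_generic
  have hsum : ∑ T with (R.Clq T ∧ S ⊆ T), (-1 : ℤ) ^ T.card =
      ∑ v ∈ R.V, R.contrib l v S := by
    have h1 : ∀ T ∈ Finset.univ.filter fun T => R.Clq T ∧ S ⊆ T, (-1 : ℤ) ^ T.card =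
        ∑ v ∈ R.V, if T ⊆ R.act v ∧ R.IsTop l v T then (-1 : ℤ) ^ T.card else 0 := by
      intro T hT
      rw [← Finset.sum_filter, Finset.sum_const,
        card_filter_isTop hl (Finset.mem_filter.mp hT).2.1, one_smul]
    rw [Finset.sum_congr rfl h1, Finset.sum_comm]
    refine Finset.sum_congr rfl fun v _ => ?_
    rw [← Finset.sum_filter, Finset.filter_filter, contrib]
    refine Finset.sum_congr (Finset.filter_congr fun T _ => ?_) fun _ _ => rfl
    tauto
  have hterm : ∀ v ∈ R.V, R.contrib l v S =
      (if S ⊆ R.act v ∧ R.IsTop (-l) v S then 1 else 0) -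
        if mink v v = 0 ∧ S ⊆ R.act v then 1 else 0 := by
    intro v hv
    by_cases hSv : S ⊆ R.act v
    · by_cases hvv : mink v v = 0
      · have := contrib_of_ideal hl (R.mem_ideals.mpr ⟨hv, hvv⟩) hS hSv
        simp only [hSv, hvv, true_and, if_true]
        linarith
      · have := contrib_of_timelike hl hv (lt_of_le_of_ne (R.vertex_causal hv) hvv) hSv
        simp [hSv, hvv, this]
    · have : R.contrib l v S = 0 := by
        refine Finset.sum_eq_zero fun T hT => ?_
        simp only [Finset.mem_filter, Finset.mem_univ, true_and] at hT
        exact absurd (hT.2.1.trans hT.2.2.1) hSv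
      simp [hSv, this]
  have hcard := card_filter_isTop hl.neg hS
  rw [hsum, Finset.sum_congr rfl hterm, Finset.sum_sub_distrib, Finset.sum_boole, Finset.sum_boole,
    hcard, ideals, Finset.filter_filter]
  simp

end RightAngledSystem

namespace RightAngledSystem

open scoped Classical

variable {ι : Type} [Fintype ι] (R : RightAngledSystem ι)

/-! ### Counting faces -/

/-- The number of faces of codimension `k` of the face `S`. -/
def cnt (k : ℕ) (S : Finset ι) : ℤ :=
  ((Finset.univ.filter fun T => R.Clq T ∧ S ⊆ T ∧ T.card = S.card + k).card : ℤ)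

/-- The number of ideal vertices of the face `S`. -/
def vi (S : Finset ι) : ℤ := ((R.ideals.filter fun v => S ⊆ R.act v).card : ℤ)

theorem vi_nonneg (S : Finset ι) : 0 ≤ R.vi S := Int.natCast_nonneg _

theorem cnt_zero {S : Finset ι} (hS : R.Clq S) : R.cnt 0 S = 1 := by
  have : (Finset.univ.filter fun T => R.Clq T ∧ S ⊆ T ∧ T.card = S.card + 0) = {S} := by
    ext T
    simp only [Finset.mem_filter, Finset.mem_univ, true_and, Finset.mem_singleton, add_zero]
    constructor
    · rintro ⟨-, h2, h3⟩
      exact (Finset.eq_of_subset_of_card_le h2 h3.le).symm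
    · rintro rfl
      exact ⟨hS, subset_rfl, rfl⟩
  rw [cnt, this]
  rfl

theorem cnt_eq_zero {S : Finset ι} {k : ℕ} (h : 6 < S.card + k) : R.cnt k S = 0 := by
  rw [cnt, Int.natCast_eq_zero, Finset.card_eq_zero, Finset.filter_eq_empty_iff]
  rintro T - ⟨h1, -, h3⟩
  have := R.card_le_six h1
  omega

theorem sum_cnt_insert (S : Finset ι) (k : ℕ) :
    ∑ j ∈ R.nbr S, R.cnt k (insert j S) = (k + 1) * R.cnt (k + 1) S := by
  set F := Finset.univ.filter fun T => R.Clq T ∧ S ⊆ T ∧ T.card = S.card + (k + 1) with hF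
  have h1 : ∀ j ∈ R.nbr S, R.cnt k (insert j S) =
      ((F.bipartiteAbove (fun j T => j ∈ T) j).card : ℤ) := by
    intro j hj
    rw [cnt, Finset.bipartiteAbove, hF, Finset.filter_filter,
      Finset.card_insert_of_notMem (R.notMem_of_mem_nbr hj)]
    congr 2
    refine Finset.filter_congr fun T _ => ?_
    rw [Finset.insert_subset_iff, add_assoc, add_comm 1 k]
    tauto
  have h2 : ∀ T ∈ F, ((R.nbr S).bipartiteBelow (fun j T => j ∈ T) T).card = k + 1 := by
    intro T hT
    simp only [hF, Finset.mem_filter, Finset.mem_univ, true_and] at hT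
    have : (R.nbr S).bipartiteBelow (fun j T => j ∈ T) T = T \ S := by
      ext j
      rw [Finset.mem_bipartiteBelow, Finset.mem_sdiff]
      constructor
      · exact fun h => ⟨h.2, R.notMem_of_mem_nbr h.1⟩
      · rintro ⟨hjT, hjS⟩
        refine ⟨R.mem_nbr.mpr fun i hi => hT.1 i (hT.2.1 hi) j hjT ?_, hjT⟩
        rintro rfl
        exact hjS hi
    rw [this, Finset.card_sdiff_of_subset hT.2.1, hT.2.2]
    omega
  rw [Finset.sum_congr rfl h1, ← Nat.cast_sum,
    Finset.sum_card_bipartiteAbove_eq_sum_card_bipartiteBelow, Finset.sum_congr rfl h2,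
    Finset.sum_const, cnt, smul_eq_mul]
  push_cast
  ring

theorem cnt_one {S : Finset ι} (hS : R.Clq S) : R.cnt 1 S = (R.nbr S).card := by
  have h := R.sum_cnt_insert S 0
  rw [Finset.sum_congr rfl fun j hj => R.cnt_zero (R.clq_insert_of_mem_nbr hS hj)] at h
  simpa using h.symm

theorem sum_vi_insert {S : Finset ι} (hS : R.Clq S) :
    ∑ j ∈ R.nbr S, R.vi (insert j S) = (10 - 2 * S.card) * R.vi S := by
  set F := R.ideals.filter fun v => S ⊆ R.act v with hF
  have h1 : ∀ j ∈ R.nbr S, R.vi (insert j S) =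
      ((F.bipartiteAbove (fun j v => j ∈ R.act v) j).card : ℤ) := by
    intro j hj
    rw [vi, Finset.bipartiteAbove, hF, Finset.filter_filter]
    congr 2
    refine Finset.filter_congr fun v _ => ?_
    rw [Finset.insert_subset_iff]
    tauto
  have h2 : ∀ v ∈ F, ((((R.nbr S).bipartiteBelow (fun j v => j ∈ R.act v) v).card : ℕ) : ℤ) =
      10 - 2 * S.card := by
    intro v hv
    obtain ⟨hv, hSv⟩ := Finset.mem_filter.mp hv
    have h := R.card_act_eq_add hv hS hSv
    rw [R.card_act_of_ideal hv] at h
    have : (R.nbr S).bipartiteBelow (fun j v => j ∈ R.act v) v = R.act v ∩ R.nbr S := by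
      ext j
      rw [Finset.mem_bipartiteBelow, Finset.mem_inter]
      tauto
    rw [this]
    omega
  rw [Finset.sum_congr rfl h1, ← Nat.cast_sum,
    Finset.sum_card_bipartiteAbove_eq_sum_card_bipartiteBelow, Nat.cast_sum,
    Finset.sum_congr rfl h2, Finset.sum_const, vi, nsmul_eq_mul]
  ring

theorem sum_insert_linear {S : Finset ι} (hS : R.Clq S) (a₀ a₁ a₂ a₃ a₄ b : ℤ) :
    ∑ j ∈ R.nbr S, (a₀ * R.cnt 0 (insert j S) + a₁ * R.cnt 1 (insert j S) +
        a₂ * R.cnt 2 (insert j S) + a₃ * R.cnt 3 (insert j S) + a₄ * R.cnt 4 (insert j S) +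
        b * R.vi (insert j S)) =
      a₀ * R.cnt 1 S + 2 * a₁ * R.cnt 2 S + 3 * a₂ * R.cnt 3 S + 4 * a₃ * R.cnt 4 S +
        5 * a₄ * R.cnt 5 S + (10 - 2 * S.card) * b * R.vi S := by
  simp only [Finset.sum_add_distrib, ← Finset.mul_sum, R.sum_cnt_insert S, R.sum_vi_insert hS]
  push_cast
  ring

theorem euler_cnt {S : Finset ι} (hS : R.Clq S) :
    ∑ k ∈ Finset.range 7, (-1 : ℤ) ^ (S.card + k) * R.cnt k S + R.vi S = 1 := by
  refine Eq.trans ?_ (R.euler_relation hS)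
  rw [vi]
  congr 1
  rw [← Finset.sum_fiberwise_of_maps_to (s := Finset.univ.filter fun T => R.Clq T ∧ S ⊆ T)
    (t := Finset.range 7) (g := fun T => T.card - S.card)]
  · refine Finset.sum_congr rfl fun k _ => ?_
    have h : ∀ T ∈ (Finset.univ.filter fun T => R.Clq T ∧ S ⊆ T).filter
        (fun T => T.card - S.card = k), (-1 : ℤ) ^ T.card = (-1) ^ (S.card + k) := by
      intro T hT
      simp only [Finset.mem_filter, Finset.mem_univ, true_and] at hT
      have := Finset.card_le_card hT.1.2
      congr 1
      omega
    rw [Finset.sum_congr rfl h, Finset.sum_const, nsmul_eq_mul, mul_comm, cnt,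
      Finset.filter_filter]
    congr 3
    refine Finset.filter_congr fun T _ => ?_
    constructor
    · rintro ⟨h1, h2, h3⟩
      exact ⟨⟨h1, h2⟩, by omega⟩
    · rintro ⟨⟨h1, h2⟩, h3⟩
      have := Finset.card_le_card h2
      exact ⟨h1, h2, by omega⟩
  · intro T hT
    have := R.card_le_six (Finset.mem_filter.mp hT).2.1
    rw [Finset.mem_range]
    omega

theorem nbr_nonempty {S : Finset ι} (hS : R.Clq S) (hcard : S.card < 5) : (R.nbr S).Nonempty := by
  obtain ⟨v, hv, hSv⟩ := R.exists_vertex hS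
  by_cases hvv : mink v v = 0
  · exact (R.exists_mem_nbr_of_ideal (R.mem_ideals.mpr ⟨hv, hvv⟩) hSv hcard).mono
      Finset.inter_subset_right
  · have hlt := lt_of_le_of_ne (R.vertex_causal hv) hvv
    have hK := R.clq_act_of_timelike hlt
    obtain ⟨i, hi, hiS⟩ := Finset.exists_mem_notMem_of_card_lt_card (s := S) (t := R.act v)
      (by rw [R.card_act_of_timelike hv hlt]; omega)
    refine ⟨i, R.mem_nbr.mpr fun j hj => hK j (hSv hj) i hi ?_⟩
    rintro rfl
    exact hiS hj

theorem nbr_insert_subset (S : Finset ι) (j : ι) : R.nbr (insert j S) ⊆ R.nbr S := by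
  intro i hi
  rw [mem_nbr] at hi ⊢
  exact fun k hk => hi k (Finset.mem_insert_of_mem hk)

/-- A facet `j` of the face `S` together with its adjacent facets and the facets parallel to it
are distinct facets of `S`. -/
theorem one_add_cnt_add_vi_le {S : Finset ι} (hS : R.Clq S) {j : ι} (hj : j ∈ R.nbr S) :
    1 + R.cnt 1 (insert j S) + R.vi (insert j S) ≤ R.cnt 1 S := by
  have hjS := R.clq_insert_of_mem_nbr hS hj
  set W := R.ideals.filter fun v => insert j S ⊆ R.act v with hW
  have hWmem : ∀ v ∈ W, v ∈ R.ideals ∧ j ∈ R.act v ∧ S ⊆ R.act v := by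
    intro v hv
    obtain ⟨h1, h2⟩ := Finset.mem_filter.mp hv
    exact ⟨h1, h2 (Finset.mem_insert_self _ _), (Finset.subset_insert _ _).trans h2⟩
  have hinj : Set.InjOn (fun v => R.opp v j) W := by
    intro v hv w hw hvw
    obtain ⟨hv1, hv2, -⟩ := hWmem v hv
    obtain ⟨hw1, hw2, -⟩ := hWmem w hw
    obtain ⟨c, hc0, hc⟩ := R.add_opp hv1 hv2
    obtain ⟨d, -, hd⟩ := R.add_opp hw1 hw2
    simp only at hvw
    rw [← hvw, hc] at hd
    have h0 := congrFun hd 0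
    rw [Pi.smul_apply, Pi.smul_apply, R.V_zero v (R.mem_ideals.mp hv1).1,
      R.V_zero w (R.mem_ideals.mp hw1).1, smul_eq_mul, smul_eq_mul, mul_one, mul_one] at h0
    rw [← h0] at hd
    exact smul_right_injective _ hc0 hd
  have hsub : insert j (R.nbr (insert j S) ∪ W.image fun v => R.opp v j) ⊆ R.nbr S := by
    refine Finset.insert_subset hj (Finset.union_subset (R.nbr_insert_subset S j) ?_)
    intro i hi
    obtain ⟨v, hv, rfl⟩ := Finset.mem_image.mp hi
    obtain ⟨hv1, hv2, hv3⟩ := hWmem v hv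
    exact R.mem_nbr.mpr fun k hk =>
      R.orthogonal_opp hv1 hv2 (R.mem_act.mp (hv3 hk)) (R.mem_nbr.mp hj k hk)
  have hdisj : Disjoint (R.nbr (insert j S)) (W.image fun v => R.opp v j) := by
    rw [Finset.disjoint_left]
    intro i hi hi'
    obtain ⟨v, hv, rfl⟩ := Finset.mem_image.mp hi'
    obtain ⟨hv1, hv2, -⟩ := hWmem v hv
    have h1 := R.mem_nbr.mp hi j (Finset.mem_insert_self _ _)
    rw [(R.opp_spec hv1 hv2).2] at h1
    norm_num at h1
  have hnot : j ∉ R.nbr (insert j S) ∪ W.image fun v => R.opp v j := by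
    rw [Finset.mem_union]
    rintro (h | h)
    · exact R.notMem_of_mem_nbr h (Finset.mem_insert_self _ _)
    · obtain ⟨v, hv, hvj⟩ := Finset.mem_image.mp h
      obtain ⟨hv1, hv2, -⟩ := hWmem v hv
      exact R.opp_ne hv1 hv2 hvj.symm
  have hcard := Finset.card_le_card hsub
  rw [Finset.card_insert_of_notMem hnot, Finset.card_union_of_disjoint hdisj,
    Finset.card_image_of_injOn hinj] at hcard
  rw [R.cnt_one hS, R.cnt_one hjS, vi]
  have : (R.ideals.filter fun v => insert j S ⊆ R.act v).card = W.card := rfl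
  omega

/-! ### Lower bounds for faces of small dimension -/

theorem edge_relation {S : Finset ι} (hS : R.Clq S) (hcard : S.card = 5) :
    R.cnt 1 S + R.vi S = 2 := by
  have h := R.euler_cnt hS
  have h0 := R.cnt_zero hS
  have h2 := fun k (hk : 1 < k) => R.cnt_eq_zero (S := S) (k := k) (by omega)
  simp [Finset.sum_range_succ, hcard, h0, h2] at h
  linarith

theorem polygon_relation {S : Finset ι} (hS : R.Clq S) (hcard : S.card = 4) :
    R.cnt 1 S = R.cnt 2 S + R.vi S := by
  have h := R.euler_cnt hS
  have h0 := R.cnt_zero hS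
  have h2 := fun k (hk : 2 < k) => R.cnt_eq_zero (S := S) (k := k) (by omega)
  simp [Finset.sum_range_succ, hcard, h0, h2] at h
  linarith

theorem polyhedron_relation {S : Finset ι} (hS : R.Clq S) (hcard : S.card = 3) :
    R.cnt 1 S - R.cnt 2 S + R.cnt 3 S + R.vi S = 2 := by
  have h := R.euler_cnt hS
  have h0 := R.cnt_zero hS
  have h2 := fun k (hk : 3 < k) => R.cnt_eq_zero (S := S) (k := k) (by omega)
  simp [Finset.sum_range_succ, hcard, h0, h2] at h
  linarith

theorem facet_relation {S : Finset ι} (hS : R.Clq S) (hcard : S.card = 1) :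
    R.cnt 1 S - R.cnt 2 S + R.cnt 3 S - R.cnt 4 S + R.cnt 5 S + R.vi S = 2 := by
  have h := R.euler_cnt hS
  have h0 := R.cnt_zero hS
  have h2 := fun k (hk : 5 < k) => R.cnt_eq_zero (S := S) (k := k) (by omega)
  simp [Finset.sum_range_succ, hcard, h0, h2] at h
  linarith

theorem card_insert_of_mem_nbr {S : Finset ι} {j : ι} (hj : j ∈ R.nbr S) :
    (insert j S).card = S.card + 1 :=
  Finset.card_insert_of_notMem (R.notMem_of_mem_nbr hj)

end RightAngledSystem

namespace RightAngledSystem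

open scoped Classical

variable {ι : Type} [Fintype ι] (R : RightAngledSystem ι)

theorem three_le_cnt_one {S : Finset ι} (hS : R.Clq S) (hcard : S.card = 4) : 3 ≤ R.cnt 1 S := by
  obtain ⟨j, hj⟩ := R.nbr_nonempty hS (by omega)
  have h1 := R.one_add_cnt_add_vi_le hS hj
  have h2 := R.edge_relation (R.clq_insert_of_mem_nbr hS hj) (by
    rw [R.card_insert_of_mem_nbr hj, hcard])
  linarith

theorem not_mutually_orthogonal {S : Finset ι} (hS : R.Clq S) (hcard : S.card = 4) {a b d : ι}
    (ha : a ∈ R.nbr S) (hb : b ∈ R.nbr (insert a S)) (hd : d ∈ R.nbr (insert a S)) :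
    mink (R.e b) (R.e d) ≠ 0 := by
  intro hbd
  have hd' : d ∈ R.nbr (insert b (insert a S)) := by
    rw [mem_nbr] at hd ⊢
    intro i hi
    rcases Finset.mem_insert.mp hi with hi' | hi'
    · rw [hi']; exact hbd
    · exact hd i hi'
  have h1 := R.clq_insert_of_mem_nbr (R.clq_insert_of_mem_nbr (R.clq_insert_of_mem_nbr hS ha) hb) hd'
  have h2 := R.card_le_six h1
  rw [R.card_insert_of_mem_nbr hd', R.card_insert_of_mem_nbr hb, R.card_insert_of_mem_nbr ha] at h2
  omega

/-- Two pairs of opposite sides of a quadrilateral cannot be mutually orthogonal. -/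
theorem not_quadrilateral {S : Finset ι} (hS : R.Clq S) (hcard : S.card = 4) {a b c d : ι}
    (ha : a ∈ R.nbr S) (hb : b ∈ R.nbr (insert a S)) (hc : c ∈ R.nbr S)
    (hd : d ∈ R.nbr (insert a S)) (hac : mink (R.e a) (R.e c) ≤ -1)
    (hbd : mink (R.e b) (R.e d) ≤ -1) (hbc : mink (R.e b) (R.e c) = 0)
    (hdc : mink (R.e d) (R.e c) = 0) : False := by
  have hab : mink (R.e a) (R.e b) = 0 := R.mem_nbr.mp hb a (Finset.mem_insert_self _ _)
  have had : mink (R.e a) (R.e d) = 0 := R.mem_nbr.mp hd a (Finset.mem_insert_self _ _)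
  have hX0 := R.add_ne_zero a c
  have hY0 := R.add_ne_zero b d
  have hXX := (R.causal _ (R.add_mem_cone hac) hX0).2
  have hYY := (R.causal _ (R.add_mem_cone hbd) hY0).2
  have hYX : mink (R.e b + R.e d) (R.e a + R.e c) = 0 := by
    simp only [mink_add_left, mink_add_right, hbc, hdc, mink_comm _ (R.e a), hab, had]
    ring
  have hnull : mink (R.e a + R.e c) (R.e a + R.e c) = 0 := by
    refine le_antisymm hXX (not_lt.mp fun hlt => ?_)
    have := mink_self_pos_of_orthogonal hlt hY0 hYX
    linarith
  have hgram : mink (R.e a) (R.e c) = -1 := by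
    rw [R.add_self] at hnull
    linarith
  refine R.card_ne_six_of_null
    (R.clq_insert_of_mem_nbr (R.clq_insert_of_mem_nbr hS ha) hb) hX0 hnull ?_ (by
      rw [R.card_insert_of_mem_nbr hb, R.card_insert_of_mem_nbr ha, hcard])
  intro i hi
  rw [mem_act, mink_add_right]
  rcases Finset.mem_insert.mp hi with rfl | hi
  · rw [hbc, mink_comm, hab, add_zero]
  · rcases Finset.mem_insert.mp hi with rfl | hi
    · rw [R.unit, hgram]; norm_num
    · rw [R.mem_nbr.mp ha i hi, R.mem_nbr.mp hc i hi, add_zero]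

theorem five_le_polygon_of_vi_eq_zero {S : Finset ι} (hS : R.Clq S) (hcard : S.card = 4)
    (hvi : R.vi S = 0) : 5 ≤ R.cnt 1 S := by
  by_contra hlt
  have hk : (R.nbr S).card ≤ 4 := by
    rw [R.cnt_one hS] at hlt
    omega
  have htwo : ∀ j ∈ R.nbr S, (R.nbr (insert j S)).card = 2 := by
    intro j hj
    have hjS := R.clq_insert_of_mem_nbr hS hj
    have h1 := R.edge_relation hjS (by rw [R.card_insert_of_mem_nbr hj, hcard])
    have h2 : R.vi (insert j S) = 0 := by
      have hsum := R.sum_vi_insert hS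
      rw [hvi, mul_zero] at hsum
      exact (Finset.sum_eq_zero_iff_of_nonneg fun i _ => R.vi_nonneg _).mp hsum j hj
    rw [R.cnt_one hjS, h2] at h1
    omega
  obtain ⟨a, ha⟩ := R.nbr_nonempty hS (by omega)
  obtain ⟨b, d, hbd, hN⟩ := Finset.card_eq_two.mp (htwo a ha)
  have hb : b ∈ R.nbr (insert a S) := by simp [hN]
  have hd : d ∈ R.nbr (insert a S) := by simp [hN]
  have hbS := R.nbr_insert_subset S a hb
  have hdS := R.nbr_insert_subset S a hd
  have hbd' := R.not_mutually_orthogonal hS hcard ha hb hd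
  have hall : ∀ x ∈ R.nbr S, ∀ y ∈ R.nbr S, x ≠ y → mink (R.e x) (R.e y) ≠ 0 →
      R.nbr (insert x S) = ((R.nbr S).erase x).erase y ∧ (R.nbr S).card = 4 := by
    intro x hx y hy hxy hne
    have hsub : R.nbr (insert x S) ⊆ ((R.nbr S).erase x).erase y := by
      intro z hz
      have hxz := R.mem_nbr.mp hz x (Finset.mem_insert_self _ _)
      rw [Finset.mem_erase, Finset.mem_erase]
      refine ⟨?_, ?_, R.nbr_insert_subset S x hz⟩
      · rintro rfl; exact hne hxz
      · rintro rfl; exact R.ne_of_orthogonal hxz rfl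
    have hc : (((R.nbr S).erase x).erase y).card = (R.nbr S).card - 1 - 1 := by
      rw [Finset.card_erase_of_mem (Finset.mem_erase.mpr ⟨hxy.symm, hy⟩),
        Finset.card_erase_of_mem hx]
    have h1 := Finset.card_le_card hsub
    rw [htwo x hx] at h1
    refine ⟨Finset.eq_of_subset_of_card_le hsub ?_, by omega⟩
    rw [htwo x hx]
    omega
  obtain ⟨hNb, hk4⟩ := hall b hbS d hdS hbd hbd'
  obtain ⟨hNd, -⟩ := hall d hdS b hbS hbd.symm (by rwa [mink_comm])
  obtain ⟨c, hc, hc'⟩ : ∃ c ∈ R.nbr S, c ∉ ({a, b, d} : Finset ι) :=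
    Finset.exists_mem_notMem_of_card_lt_card (by
      have := Finset.card_le_three (a := a) (b := b) (c := d)
      omega)
  simp only [Finset.mem_insert, Finset.mem_singleton, not_or] at hc'
  obtain ⟨hca, hcb, hcd⟩ := hc'
  have hbc : mink (R.e b) (R.e c) = 0 := by
    have : c ∈ R.nbr (insert b S) := by simp [hNb, hcb, hcd, -mem_nbr, hc]
    exact R.mem_nbr.mp this b (Finset.mem_insert_self _ _)
  have hdc : mink (R.e d) (R.e c) = 0 := by
    have : c ∈ R.nbr (insert d S) := by simp [hNd, hcb, hcd, -mem_nbr, hc]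
    exact R.mem_nbr.mp this d (Finset.mem_insert_self _ _)
  have hac : mink (R.e a) (R.e c) ≠ 0 := by
    intro h
    have : c ∈ R.nbr (insert a S) := by
      rw [mem_nbr]
      intro i hi
      rcases Finset.mem_insert.mp hi with hi' | hi'
      · rw [hi', h]
      · exact R.mem_nbr.mp hc i hi'
    simp [hN, hcb, hcd, -mem_nbr] at this
  exact R.not_quadrilateral hS hcard ha hb hc hd ((R.gram a c (Ne.symm hca)).resolve_left hac)
    ((R.gram b d hbd).resolve_left hbd') hbc hdc

theorem four_le_polygon_of_vi_eq_one {S : Finset ι} (hS : R.Clq S) (hcard : S.card = 4)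
    (hvi : R.vi S = 1) : 4 ≤ R.cnt 1 S := by
  by_contra hlt
  have h3 := R.three_le_cnt_one hS hcard
  have hk : (R.nbr S).card = 3 := by
    rw [R.cnt_one hS] at hlt h3
    omega
  obtain ⟨v, hvS⟩ : ∃ v, (R.ideals.filter fun v => S ⊆ R.act v) = {v} :=
    Finset.card_eq_one.mp (by rw [vi] at hvi; exact_mod_cast hvi)
  obtain ⟨hv, hSv⟩ : v ∈ R.ideals ∧ S ⊆ R.act v := by
    rw [← Finset.mem_filter (p := fun v => S ⊆ R.act v), hvS]
    exact Finset.mem_singleton_self v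
  obtain ⟨i, hi⟩ := R.exists_mem_nbr_of_ideal hv hSv (by omega)
  obtain ⟨hiv, hiS⟩ := Finset.mem_inter.mp hi
  have hoS : R.opp v i ∈ R.nbr S := R.mem_nbr.mpr fun j hj =>
    R.orthogonal_opp hv hiv (R.mem_act.mp (hSv hj)) (R.mem_nbr.mp hiS j hj)
  have hov := (R.opp_spec hv hiv).1
  have hc2 : (R.act v ∩ R.nbr S).card = 2 := by
    have h := R.card_act_eq_add hv hS hSv
    rw [R.card_act_of_ideal hv] at h
    omega
  obtain ⟨c, hc, hcv⟩ : ∃ c ∈ R.nbr S, c ∉ R.act v ∩ R.nbr S :=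
    Finset.exists_mem_notMem_of_card_lt_card (by omega)
  have hcv' : c ∉ R.act v := fun h => hcv (Finset.mem_inter.mpr ⟨h, hc⟩)
  have hcS := R.clq_insert_of_mem_nbr hS hc
  have hvic : R.vi (insert c S) = 0 := by
    rw [vi, Int.natCast_eq_zero, Finset.card_eq_zero, Finset.filter_eq_empty_iff]
    intro w hw hcw
    have : w ∈ (R.ideals.filter fun v => S ⊆ R.act v) :=
      Finset.mem_filter.mpr ⟨hw, (Finset.subset_insert _ _).trans hcw⟩
    rw [hvS, Finset.mem_singleton] at this
    rw [this] at hcw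
    exact hcv' (hcw (Finset.mem_insert_self _ _))
  have hedge := R.edge_relation hcS (by rw [R.card_insert_of_mem_nbr hc, hcard])
  have hNc : R.nbr (insert c S) = (R.nbr S).erase c := by
    refine Finset.eq_of_subset_of_card_le (fun z hz => ?_) ?_
    · refine Finset.mem_erase.mpr ⟨?_, R.nbr_insert_subset S c hz⟩
      rintro rfl
      exact R.notMem_of_mem_nbr hz (Finset.mem_insert_self _ _)
    · rw [Finset.card_erase_of_mem hc, hk]
      rw [R.cnt_one hcS] at hedge
      omega
  have horth : ∀ z ∈ R.nbr S, z ∈ R.act v → mink (R.e c) (R.e z) = 0 := by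
    intro z hz hzv
    have : z ∈ R.nbr (insert c S) := by
      rw [hNc, Finset.mem_erase]
      refine ⟨?_, hz⟩
      rintro rfl
      exact hcv' hzv
    exact R.mem_nbr.mp this c (Finset.mem_insert_self _ _)
  obtain ⟨t, ht0, ht⟩ := R.add_opp hv hiv
  have h1 : mink (R.e c) (t • v) = 0 := by
    rw [← ht, mink_add_right, horth i hiS hiv, horth _ hoS hov, add_zero]
  rw [mink_smul_right] at h1
  exact hcv' (R.mem_act.mpr ((mul_eq_zero.mp h1).resolve_left ht0))

/-- A right-angled polygon satisfies the pentagon inequality. -/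
theorem polygon_bound {S : Finset ι} (hS : R.Clq S) (hcard : S.card = 4) :
    5 ≤ R.cnt 2 S + 2 * R.vi S := by
  have h1 := R.polygon_relation hS hcard
  have h3 := R.three_le_cnt_one hS hcard
  have h0 := R.vi_nonneg S
  rcases (by omega : R.vi S = 0 ∨ R.vi S = 1 ∨ 2 ≤ R.vi S) with h | h | h
  · linarith [R.five_le_polygon_of_vi_eq_zero hS hcard h]
  · linarith [R.four_le_polygon_of_vi_eq_one hS hcard h]
  · linarith

/-! ### Summation over the facets of a face -/

section
variable {S : Finset ι}

theorem polygon_edges (hS : R.Clq S) (hcard : S.card = 4) :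
    R.cnt 2 S + R.vi S = R.cnt 1 S := by
  linarith [R.polygon_relation hS hcard]

theorem polyhedron_edges (hS : R.Clq S) (hcard : S.card = 3) :
    3 * R.cnt 3 S + 4 * R.vi S = 2 * R.cnt 2 S := by
  have h := R.sum_insert_linear hS 0 (-1) 1 0 0 1
  rw [Finset.sum_eq_zero fun j hj => by
    linarith [R.polygon_edges (R.clq_insert_of_mem_nbr hS hj) (by
      rw [R.card_insert_of_mem_nbr hj, hcard])], hcard] at h
  push_cast at h
  linarith

theorem polyhedron_polygons (hS : R.Clq S) (hcard : S.card = 3) :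
    5 * R.cnt 1 S ≤ 3 * R.cnt 3 S + 8 * R.vi S := by
  have h := R.sum_insert_linear hS (-5) 0 1 0 0 2
  have hnn := Finset.sum_nonneg fun j (hj : j ∈ R.nbr S) => by
    have h1 := R.polygon_bound (R.clq_insert_of_mem_nbr hS hj) (by
      rw [R.card_insert_of_mem_nbr hj, hcard])
    have h2 := R.cnt_zero (R.clq_insert_of_mem_nbr hS hj)
    exact (show 0 ≤ -5 * R.cnt 0 (insert j S) + 0 * R.cnt 1 (insert j S) +
        1 * R.cnt 2 (insert j S) + 0 * R.cnt 3 (insert j S) + 0 * R.cnt 4 (insert j S) +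
        2 * R.vi (insert j S) by linarith)
  rw [h, hcard] at hnn
  push_cast at hnn
  linarith

theorem polyhedron_bound (hS : R.Clq S) (hcard : S.card = 3) : 9 ≤ R.cnt 1 S + R.vi S := by
  have h1 := R.polyhedron_relation hS hcard
  have h2 := R.polyhedron_edges hS hcard
  have h3 := R.polyhedron_polygons hS hcard
  by_contra hlt
  have hsum := R.sum_vi_insert hS
  rw [Finset.sum_eq_zero, hcard] at hsum
  · push_cast at hsum
    omega
  · intro j hj
    have h4 := R.one_add_cnt_add_vi_le hS hj
    have h5 := R.three_le_cnt_one (R.clq_insert_of_mem_nbr hS hj) (by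
      rw [R.card_insert_of_mem_nbr hj, hcard])
    have h6 := R.vi_nonneg (insert j S)
    omega

theorem ten_le_cnt_one (hS : R.Clq S) (hcard : S.card = 2) : 10 ≤ R.cnt 1 S := by
  obtain ⟨j, hj⟩ := R.nbr_nonempty hS (by omega)
  have h1 := R.one_add_cnt_add_vi_le hS hj
  have h2 := R.polyhedron_bound (R.clq_insert_of_mem_nbr hS hj) (by
    rw [R.card_insert_of_mem_nbr hj, hcard])
  linarith

theorem fourfold_edges (hS : R.Clq S) (hcard : S.card = 2) :
    2 * R.cnt 4 S + 4 * R.vi S = R.cnt 3 S := by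
  have h := R.sum_insert_linear hS 0 0 (-2) 3 0 4
  rw [Finset.sum_eq_zero fun j hj => by
    linarith [R.polyhedron_edges (R.clq_insert_of_mem_nbr hS hj) (by
      rw [R.card_insert_of_mem_nbr hj, hcard])], hcard] at h
  push_cast at h
  linarith

theorem fourfold_polyhedra (hS : R.Clq S) (hcard : S.card = 2) :
    -2 * R.cnt 1 S + 2 * R.cnt 2 S - 3 * R.cnt 3 S + 4 * R.cnt 4 S + 6 * R.vi S = 0 := by
  have h := R.sum_insert_linear hS (-2) 1 (-1) 1 0 1
  rw [Finset.sum_eq_zero fun j hj => by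
    linarith [R.polyhedron_relation (R.clq_insert_of_mem_nbr hS hj) (by
      rw [R.card_insert_of_mem_nbr hj, hcard]), R.cnt_zero (R.clq_insert_of_mem_nbr hS hj)],
    hcard] at h
  push_cast at h
  linarith

theorem fourfold_polygons (hS : R.Clq S) (hcard : S.card = 2) :
    10 * R.cnt 2 S ≤ 12 * R.cnt 4 S + 48 * R.vi S := by
  have h := R.sum_insert_linear hS 0 (-5) 0 3 0 8
  have hnn := Finset.sum_nonneg fun j (hj : j ∈ R.nbr S) => by
    have h1 := R.polyhedron_polygons (R.clq_insert_of_mem_nbr hS hj) (by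
      rw [R.card_insert_of_mem_nbr hj, hcard])
    exact (show 0 ≤ 0 * R.cnt 0 (insert j S) + -5 * R.cnt 1 (insert j S) +
        0 * R.cnt 2 (insert j S) + 3 * R.cnt 3 (insert j S) + 0 * R.cnt 4 (insert j S) +
        8 * R.vi (insert j S) by linarith)
  rw [h, hcard] at hnn
  push_cast at hnn
  linarith

theorem fivefold_edges (hS : R.Clq S) (hcard : S.card = 1) :
    5 * R.cnt 5 S + 16 * R.vi S = 2 * R.cnt 4 S := by
  have h := R.sum_insert_linear hS 0 0 0 (-1) 2 4
  rw [Finset.sum_eq_zero fun j hj => by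
    linarith [R.fourfold_edges (R.clq_insert_of_mem_nbr hS hj) (by
      rw [R.card_insert_of_mem_nbr hj, hcard])], hcard] at h
  push_cast at h
  linarith

theorem fivefold_polyhedra (hS : R.Clq S) (hcard : S.card = 1) :
    -4 * R.cnt 2 S + 6 * R.cnt 3 S - 12 * R.cnt 4 S + 20 * R.cnt 5 S + 48 * R.vi S = 0 := by
  have h := R.sum_insert_linear hS 0 (-2) 2 (-3) 4 6
  rw [Finset.sum_eq_zero fun j hj => by
    linarith [R.fourfold_polyhedra (R.clq_insert_of_mem_nbr hS hj) (by
      rw [R.card_insert_of_mem_nbr hj, hcard])], hcard] at h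
  push_cast at h
  linarith

theorem fivefold_polygons (hS : R.Clq S) (hcard : S.card = 1) :
    30 * R.cnt 3 S ≤ 60 * R.cnt 5 S + 384 * R.vi S := by
  have h := R.sum_insert_linear hS 0 0 (-10) 0 12 48
  have hnn := Finset.sum_nonneg fun j (hj : j ∈ R.nbr S) => by
    have h1 := R.fourfold_polygons (R.clq_insert_of_mem_nbr hS hj) (by
      rw [R.card_insert_of_mem_nbr hj, hcard])
    exact (show 0 ≤ 0 * R.cnt 0 (insert j S) + 0 * R.cnt 1 (insert j S) +
        -10 * R.cnt 2 (insert j S) + 0 * R.cnt 3 (insert j S) + 12 * R.cnt 4 (insert j S) +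
        48 * R.vi (insert j S) by linarith)
  rw [h, hcard] at hnn
  push_cast at hnn
  linarith

theorem fivefold_bound (hS : R.Clq S) (hcard : S.card = 1) : 26 ≤ R.cnt 1 S + R.vi S := by
  have h1 := R.facet_relation hS hcard
  have h2 := R.fivefold_edges hS hcard
  have h3 := R.fivefold_polyhedra hS hcard
  have h4 := R.fivefold_polygons hS hcard
  have h5 : 5 * R.cnt 1 S - 10 ≤ 7 * R.vi S := by linarith
  have hstep : ∀ j ∈ R.nbr S, 11 + R.vi (insert j S) ≤ R.cnt 1 S := by
    intro j hj
    have h6 := R.one_add_cnt_add_vi_le hS hj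
    have h7 := R.ten_le_cnt_one (R.clq_insert_of_mem_nbr hS hj) (by
      rw [R.card_insert_of_mem_nbr hj, hcard])
    linarith
  have h11 : 11 ≤ R.cnt 1 S := by
    obtain ⟨j, hj⟩ := R.nbr_nonempty hS (by omega)
    linarith [hstep j hj, R.vi_nonneg (insert j S)]
  have h8 : 11 * R.cnt 1 S + 8 * R.vi S ≤ R.cnt 1 S * R.cnt 1 S := by
    have hsum := Finset.sum_le_sum hstep
    rw [Finset.sum_add_distrib, R.sum_vi_insert hS, Finset.sum_const, Finset.sum_const,
      nsmul_eq_mul, nsmul_eq_mul, ← R.cnt_one hS, hcard] at hsum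
    push_cast at hsum
    linarith
  have h16 : 16 ≤ R.cnt 1 S := by
    by_contra hlt
    nlinarith
  linarith

end

/-- A right-angled system in dimension six has at least `27` facets. -/
theorem twentySeven_le_card {ι : Type} [Fintype ι] (R : RightAngledSystem ι) :
    27 ≤ Fintype.card ι := by
  obtain ⟨j, hj⟩ := R.nbr_nonempty R.clq_empty (by simp)
  have h1 := R.one_add_cnt_add_vi_le R.clq_empty hj
  have h2 := R.fivefold_bound (R.clq_insert_of_mem_nbr R.clq_empty hj) (by simp)
  rw [R.cnt_one R.clq_empty] at h1
  have h3 : (R.nbr ∅).card ≤ Fintype.card ι := Finset.card_le_univ _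
  omega

end RightAngledSystem

/-! ### The cone over a polyhedron -/

section Lift

variable {n : ℕ}

/-- The spatial part of a vector of Minkowski space. -/
def spatial (x : Fin (n + 1) → ℝ) : EuclideanSpace ℝ (Fin n) := WithLp.toLp 2 fun i => x i.succ

/-- The point of the hyperplane `x₀ = 1` above a point of the Klein model. -/
def kleinLift (y : EuclideanSpace ℝ (Fin n)) : Fin (n + 1) → ℝ := Fin.cons 1 y.ofLp

/-- A vector of the Klein model as a direction in the hyperplane `x₀ = 1`. -/
def horizontal (d : EuclideanSpace ℝ (Fin n)) : Fin (n + 1) → ℝ := Fin.cons 0 d.ofLp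

@[simp] theorem kleinLift_zero (y : EuclideanSpace ℝ (Fin n)) : kleinLift y 0 = 1 := rfl

@[simp] theorem horizontal_zero (y : EuclideanSpace ℝ (Fin n)) : horizontal y 0 = 0 := rfl

theorem mink_eq_inner (x y : Fin (n + 1) → ℝ) :
    mink x y = -(x 0 * y 0) + inner ℝ (spatial x) (spatial y) := by
  simp [mink, spatial, PiLp.inner_apply, mul_comm]

@[simp] theorem spatial_kleinLift (y : EuclideanSpace ℝ (Fin n)) : spatial (kleinLift y) = y := rfl

@[simp] theorem spatial_horizontal (y : EuclideanSpace ℝ (Fin n)) : spatial (horizontal y) = y :=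
  rfl

theorem ext_spatial {x y : Fin (n + 1) → ℝ} (h0 : x 0 = y 0) (h : spatial x = spatial y) :
    x = y := by
  funext i
  refine Fin.cases h0 (fun j => ?_) i
  exact congrFun (congrArg WithLp.ofLp h) j

theorem spatial_add (x y : Fin (n + 1) → ℝ) : spatial (x + y) = spatial x + spatial y := rfl

theorem spatial_sub (x y : Fin (n + 1) → ℝ) : spatial (x - y) = spatial x - spatial y := rfl

theorem spatial_smul (c : ℝ) (x : Fin (n + 1) → ℝ) : spatial (c • x) = c • spatial x := rfl

theorem mink_kleinLift (x : Fin (n + 1) → ℝ) (y : EuclideanSpace ℝ (Fin n)) :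
    mink x (kleinLift y) = -(x 0) + inner ℝ (spatial x) y := by
  rw [mink_eq_inner, kleinLift_zero, spatial_kleinLift, mul_one]

theorem mink_horizontal (x : Fin (n + 1) → ℝ) (y : EuclideanSpace ℝ (Fin n)) :
    mink x (horizontal y) = inner ℝ (spatial x) y := by
  rw [mink_eq_inner, horizontal_zero, spatial_horizontal, mul_zero, neg_zero, zero_add]

theorem mink_self_eq (x : Fin (n + 1) → ℝ) : mink x x = -(x 0) ^ 2 + ‖spatial x‖ ^ 2 := by
  rw [mink_eq_inner, real_inner_self_eq_norm_sq]; ring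

theorem kleinLift_add_smul (y d : EuclideanSpace ℝ (Fin n)) (t : ℝ) :
    kleinLift (y + t • d) = kleinLift y + t • horizontal d := by
  refine ext_spatial ?_ ?_
  · simp
  · simp [spatial_add, spatial_smul]

theorem kleinLift_combination (y z : EuclideanSpace ℝ (Fin n)) {a b : ℝ} (h : a + b = 1) :
    kleinLift (a • y + b • z) = a • kleinLift y + b • kleinLift z := by
  refine ext_spatial ?_ ?_
  · simp [h]
  · simp [spatial_add, spatial_smul]

theorem kleinLift_kleinMap {x : Fin (n + 1) → ℝ} (hx : x 0 ≠ 0) :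
    kleinLift (kleinMap x) = (x 0)⁻¹ • x := by
  refine ext_spatial ?_ ?_
  · simp [hx]
  · ext i
    simp [spatial, kleinLift, kleinMap, div_eq_inv_mul]

theorem kleinMap_smul_kleinLift {c : ℝ} (hc : c ≠ 0) (y : EuclideanSpace ℝ (Fin n)) :
    kleinMap (c • kleinLift y) = y := by
  ext i
  simp [kleinMap, kleinLift, hc]

theorem continuous_kleinLift : Continuous (kleinLift : EuclideanSpace ℝ (Fin n) → _) := by
  refine continuous_pi fun i => ?_
  refine Fin.cases ?_ (fun j => ?_) i
  · exact continuous_const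
  · exact (continuous_apply j).comp (PiLp.continuous_ofLp 2 _)

end Lift

namespace HypPolyhedron

section Cone

variable {n : ℕ} (P : HypPolyhedron n)

/-- The linear cone over a polyhedron. -/
def linCone : Set (Fin (n + 1) → ℝ) := {x | ∀ i, mink (P.e i) x ≤ 0}

theorem smul_mem_linCone {x : Fin (n + 1) → ℝ} (hx : x ∈ P.linCone) {c : ℝ} (hc : 0 ≤ c) :
    c • x ∈ P.linCone := fun i => by
  rw [mink_smul_right]
  exact mul_nonpos_of_nonneg_of_nonpos hc (hx i)

theorem add_mem_linCone {x y : Fin (n + 1) → ℝ} (hx : x ∈ P.linCone) (hy : y ∈ P.linCone) :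
    x + y ∈ P.linCone := fun i => by
  rw [mink_add_right]
  exact add_nonpos (hx i) (hy i)

theorem kleinMap_image_carrier :
    kleinMap '' P.carrier = {y | ‖y‖ < 1 ∧ kleinLift y ∈ P.linCone} := by
  ext y
  constructor
  · rintro ⟨x, ⟨⟨hx1, hx0⟩, hx⟩, rfl⟩
    have hl := kleinLift_kleinMap hx0.ne'
    constructor
    · have h1 := mink_self_eq (kleinLift (kleinMap x))
      rw [hl, mink_smul_left, mink_smul_right, hx1, ← hl, kleinLift_zero, spatial_kleinLift] at h1
      have h2 : 0 < (x 0)⁻¹ * (x 0)⁻¹ := by positivity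
      have h3 : ‖kleinMap x‖ ^ 2 < 1 ^ 2 := by nlinarith
      exact lt_of_pow_lt_pow_left₀ 2 zero_le_one h3
    · rw [hl]
      exact P.smul_mem_linCone hx (inv_nonneg.mpr hx0.le)
  · rintro ⟨hy, hmem⟩
    have hpos : 0 < 1 - ‖y‖ ^ 2 := by nlinarith [norm_nonneg y]
    have hs : 0 < (Real.sqrt (1 - ‖y‖ ^ 2))⁻¹ := inv_pos.mpr (Real.sqrt_pos.mpr hpos)
    refine ⟨(Real.sqrt (1 - ‖y‖ ^ 2))⁻¹ • kleinLift y, ⟨⟨?_, ?_⟩, P.smul_mem_linCone hmem hs.le⟩,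
      kleinMap_smul_kleinLift hs.ne' y⟩
    · rw [mink_smul_left, mink_smul_right, mink_self_eq, kleinLift_zero, spatial_kleinLift,
        ← mul_assoc, ← mul_inv, Real.mul_self_sqrt hpos.le]
      field_simp
      ring
    · simpa using hpos

theorem exists_interior_point : ∃ y : EuclideanSpace ℝ (Fin n), ‖y‖ < 1 ∧
    ∀ i, mink (P.e i) (kleinLift y) < 0 := by
  obtain ⟨y, hy⟩ := P.nonempty_int
  change y ∈ interior (kleinMap '' P.carrier) at hy
  have hsub := P.kleinMap_image_carrier
  refine ⟨y, (hsub.subset (interior_subset hy)).1, fun i => ?_⟩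
  have hcont : Continuous fun t : ℝ => y + t • spatial (P.e i) := by fun_prop
  have hev : ∀ᶠ t : ℝ in nhdsWithin 0 (Set.Ioi 0), y + t • spatial (P.e i) ∈
      kleinMap '' P.carrier := by
    have h1 := hcont.tendsto 0
    simp only [zero_smul, add_zero] at h1
    exact (h1.eventually (mem_interior_iff_mem_nhds.mp hy)).filter_mono nhdsWithin_le_nhds
  obtain ⟨t, ht, ht0⟩ := (hev.and self_mem_nhdsWithin).exists
  have h2 := (hsub.subset ht).2 i
  rw [kleinLift_add_smul, mink_add_right, mink_smul_right, mink_horizontal,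
    real_inner_self_eq_norm_sq] at h2
  have h3 := mink_self_eq (P.e i)
  rw [P.unit] at h3
  have h4 : 0 < t * ‖spatial (P.e i)‖ ^ 2 := mul_pos ht0 (by nlinarith [sq_nonneg (P.e i 0)])
  linarith

theorem isClosed_linCone : IsClosed P.linCone := by
  have : P.linCone = ⋂ i, {x | mink (P.e i) x ≤ 0} := by
    ext x
    simp [linCone]
  rw [this]
  exact isClosed_iInter fun i => isClosed_le (continuous_mink_right _) continuous_const

theorem cl_eq_inter : P.cl = {y | ‖y‖ ≤ 1 ∧ kleinLift y ∈ P.linCone} := by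
  rw [cl, kleinMap_image_carrier]
  refine Set.Subset.antisymm (closure_minimal (fun y hy => ⟨hy.1.le, hy.2⟩) ?_) fun y hy => ?_
  · exact (isClosed_le continuous_norm continuous_const).inter
      (P.isClosed_linCone.preimage continuous_kleinLift)
  · obtain ⟨y₀, hy₀, hneg⟩ := P.exists_interior_point
    have hcont : Continuous fun t : ℝ => (1 - t) • y + t • y₀ := by fun_prop
    have hlim := (hcont.tendsto 0).mono_left (nhdsWithin_le_nhds (s := Set.Ioi 0))
    simp only [sub_zero, one_smul, zero_smul, add_zero] at hlim
    refine mem_closure_of_tendsto hlim ?_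
    have hlt : ∀ᶠ t : ℝ in nhdsWithin 0 (Set.Ioi 0), t < 1 :=
      (gt_mem_nhds one_pos).filter_mono nhdsWithin_le_nhds
    filter_upwards [self_mem_nhdsWithin, hlt] with t ht0 ht1
    have ht0' : 0 < t := ht0
    constructor
    · have h1 := norm_add_le ((1 - t) • y) (t • y₀)
      rw [norm_smul, norm_smul, Real.norm_of_nonneg (by linarith : (0 : ℝ) ≤ 1 - t),
        Real.norm_of_nonneg ht0'.le] at h1
      nlinarith [hy.1, norm_nonneg y]
    · rw [kleinLift_combination y y₀ (by ring)]
      exact P.add_mem_linCone (P.smul_mem_linCone hy.2 (by linarith))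
        (P.smul_mem_linCone (fun i => (hneg i).le) ht0'.le)

theorem mem_verts_of_norm_eq_one (hfv : P.FiniteVolume) {y : EuclideanSpace ℝ (Fin n)}
    (hy : y ∈ P.cl) (hnorm : ‖y‖ = 1) : y ∈ P.verts := by
  have hsub : P.cl ⊆ Metric.closedBall 0 1 := fun z hz => by
    rw [P.cl_eq_inter] at hz
    simpa using hz.1
  have hext : y ∈ Set.extremePoints ℝ (Metric.closedBall (0 : EuclideanSpace ℝ (Fin n)) 1) :=
    StrictConvexSpace.sphere_subset_extremePoints_closedBall 0 one_ne_zero (by simpa using hnorm)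
  have hext' : y ∈ Set.extremePoints ℝ P.cl :=
    ⟨hy, fun a ha b hb hab => hext.2 (hsub ha) (hsub hb) hab⟩
  rw [hfv.2] at hext'
  exact extremePoints_convexHull_subset hext'

theorem verts_subset_cl : P.verts ⊆ P.cl := fun _ hv => hv.subset rfl

theorem verts_subset_extremePoints : P.verts ⊆ Set.extremePoints ℝ P.cl := fun _ hv =>
  isExtreme_singleton.mp hv.isExtreme

theorem faces_finite (hfv : P.FiniteVolume) (k : ℕ) : (P.faces k).Finite := by
  have hcompact : IsCompact P.cl := by
    rw [hfv.2]
    exact hfv.1.isCompact_convexHull (𝕜 := ℝ)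
  have hconvex : Convex ℝ P.cl := by
    rw [hfv.2]
    exact convex_convexHull ℝ _
  refine Set.Finite.of_finite_image (f := Set.extremePoints ℝ)
    (hfv.1.finite_subsets.subset ?_) ?_
  · rintro _ ⟨F, hF, rfl⟩
    refine (hF.1.isExtreme.extremePoints_subset_extremePoints).trans ?_
    rw [hfv.2]
    exact extremePoints_convexHull_subset
  · intro F hF G hG hFG
    change Set.extremePoints ℝ F = Set.extremePoints ℝ G at hFG
    rw [← closure_convexHull_extremePoints (hF.1.isCompact hcompact) (hF.1.convex hconvex), hFG,
      closure_convexHull_extremePoints (hG.1.isCompact hcompact) (hG.1.convex hconvex)]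

end Cone

end HypPolyhedron

theorem exists_ne_zero_inner_eq_zero {n : ℕ} (hn : 2 ≤ n) (z : EuclideanSpace ℝ (Fin n)) :
    ∃ u, u ≠ 0 ∧ inner ℝ z u = 0 := by
  have h1 := Submodule.finrank_add_finrank_orthogonal (Submodule.span ℝ {z})
  have h2 := finrank_span_le_card (R := ℝ) ({z} : Set (EuclideanSpace ℝ (Fin n)))
  simp only [Set.toFinset_singleton, Finset.card_singleton, finrank_euclideanSpace,
    Fintype.card_fin] at h1 h2
  have h3 : (Submodule.span ℝ {z})ᗮ ≠ ⊥ := fun h => by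
    rw [h, finrank_bot] at h1
    omega
  obtain ⟨u, hu, hu0⟩ := Submodule.exists_mem_ne_zero_of_ne_bot h3
  exact ⟨u, hu0, Submodule.mem_orthogonal_singleton_iff_inner_right.mp hu⟩

namespace HypPolyhedron

section Causal

variable {n : ℕ} (P : HypPolyhedron n)

/-- No point of the unit sphere is interior to the linear inequalities of a polyhedron of finite
volume. -/
theorem not_interior_of_norm_eq_one (hn : 2 ≤ n) (hfv : P.FiniteVolume)
    {z : EuclideanSpace ℝ (Fin n)} (hz : ‖z‖ = 1) : ¬∀ i, mink (P.e i) (kleinLift z) < 0 := by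
  intro hneg
  obtain ⟨u, hu0, hzu⟩ := exists_ne_zero_inner_eq_zero hn z
  have hz0 : z ≠ 0 := by
    rintro rfl
    simp at hz
  have hcont : ContinuousAt (fun s : ℝ => ‖z + s • u‖⁻¹ • (z + s • u)) 0 := by
    have hne : ‖z + (0 : ℝ) • u‖ ≠ 0 := by simpa using hz0
    fun_prop (disch := assumption)
  have hlim := hcont.tendsto
  simp only [zero_smul, add_zero, hz, inv_one, one_smul] at hlim
  have hneg' : ∀ᶠ w in nhds z, ∀ i, mink (P.e i) (kleinLift w) < 0 :=
    Filter.eventually_all.mpr fun i =>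
      ((continuous_mink_right (P.e i)).comp continuous_kleinLift).continuousAt.eventually_lt
        continuousAt_const (hneg i)
  have hvert : ∀ᶠ w in nhds z, w ∉ P.verts \ {z} :=
    (hfv.1.subset Set.sdiff_subset).isClosed.isOpen_compl.mem_nhds (by simp)
  have hadd : ∀ᶠ w in nhds z, w ≠ 0 := isOpen_ne.mem_nhds hz0
  have hev := (hlim.eventually (hneg'.and (hvert.and hadd))).filter_mono
    (nhdsWithin_le_nhds (s := Set.Ioi 0))
  obtain ⟨s, ⟨h1, h2, h3⟩, hs⟩ := (hev.and self_mem_nhdsWithin).exists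
  have hs0 : 0 < s := hs
  have hne : z + s • u ≠ 0 := fun h => h3 (by rw [h, smul_zero])
  have hnorm : 0 < ‖z + s • u‖ := norm_pos_iff.mpr hne
  have hw1 : ‖‖z + s • u‖⁻¹ • (z + s • u)‖ = 1 := by
    rw [norm_smul, norm_inv, norm_norm, inv_mul_cancel₀ hnorm.ne']
  have hwv := P.mem_verts_of_norm_eq_one hfv
    (P.cl_eq_inter.superset ⟨hw1.le, fun i => (h1 i).le⟩) hw1
  have hwz : ‖z + s • u‖⁻¹ • (z + s • u) = z := by
    by_contra hwz
    exact h2 ⟨hwv, hwz⟩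
  have h4 := congrArg (fun w => inner ℝ w u) hwz
  simp only [real_inner_smul_left, inner_add_left, hzu, zero_add,
    real_inner_self_eq_norm_sq] at h4
  have h5 : 0 < ‖u‖ := norm_pos_iff.mpr hu0
  have h6 : 0 < ‖z + s • u‖⁻¹ * (s * ‖u‖ ^ 2) := by positivity
  exact h6.ne' h4

theorem norm_le_one_of_kleinLift_mem (hn : 2 ≤ n) (hfv : P.FiniteVolume)
    {y : EuclideanSpace ℝ (Fin n)} (hy : kleinLift y ∈ P.linCone) : ‖y‖ ≤ 1 := by
  obtain ⟨y₀, hy₀, hneg⟩ := P.exists_interior_point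
  by_contra! hcon
  have hcont : Continuous fun t : ℝ => ‖(1 - t) • y₀ + t • y‖ := by fun_prop
  obtain ⟨t, ⟨ht0, ht1⟩, ht⟩ := intermediate_value_Ioo zero_le_one hcont.continuousOn
    (show (1 : ℝ) ∈ _ by simpa using ⟨hy₀, hcon⟩)
  refine P.not_interior_of_norm_eq_one hn hfv ht fun i => ?_
  rw [kleinLift_combination _ _ (by ring), mink_add_right, mink_smul_right, mink_smul_right]
  nlinarith [hneg i, hy i]

theorem cl_eq_preimage (hn : 2 ≤ n) (hfv : P.FiniteVolume) :
    P.cl = {y | kleinLift y ∈ P.linCone} := by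
  rw [P.cl_eq_inter]
  ext y
  exact ⟨fun h => h.2, fun h => ⟨P.norm_le_one_of_kleinLift_mem hn hfv h, h⟩⟩

theorem eq_smul_kleinLift {x : Fin (n + 1) → ℝ} (hx : x 0 ≠ 0) :
    x = x 0 • kleinLift (kleinMap x) := by
  rw [kleinLift_kleinMap hx, smul_smul, mul_inv_cancel₀ hx, one_smul]

theorem kleinMap_mem_cl (hn : 2 ≤ n) (hfv : P.FiniteVolume) {x : Fin (n + 1) → ℝ}
    (hx : x ∈ P.linCone) (hx0 : 0 < x 0) : kleinMap x ∈ P.cl := by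
  rw [P.cl_eq_preimage hn hfv, Set.mem_ofPred_eq, kleinLift_kleinMap hx0.ne']
  exact P.smul_mem_linCone hx (inv_nonneg.mpr hx0.le)

theorem eq_zero_of_mem_linCone (hn : 2 ≤ n) (hfv : P.FiniteVolume) {x : Fin (n + 1) → ℝ}
    (hx : x ∈ P.linCone) (hx0 : x 0 = 0) : x = 0 := by
  obtain ⟨y₀, hy₀, hneg⟩ := P.exists_interior_point
  have hh : horizontal (spatial x) = x := ext_spatial (by simp [hx0]) (by simp)
  have hbound : ∀ s : ℝ, 0 ≤ s → ‖y₀ + s • spatial x‖ ≤ 1 := fun s hs => by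
    refine P.norm_le_one_of_kleinLift_mem hn hfv ?_
    rw [kleinLift_add_smul, hh]
    exact P.add_mem_linCone (fun i => (hneg i).le) (P.smul_mem_linCone hx hs)
  rw [← hh]
  suffices h : spatial x = 0 by
    rw [h]
    exact ext_spatial rfl rfl
  by_contra hne
  have hpos : 0 < ‖spatial x‖ := norm_pos_iff.mpr hne
  have h1 := hbound (3 / ‖spatial x‖) (by positivity)
  have h2 := norm_sub_le (y₀ + (3 / ‖spatial x‖) • spatial x) y₀
  rw [add_sub_cancel_left, norm_smul, Real.norm_of_nonneg (by positivity),
    div_mul_cancel₀ _ hpos.ne'] at h2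
  linarith

theorem coord_zero_pos_of_mem_linCone (hn : 2 ≤ n) (hfv : P.FiniteVolume) {x : Fin (n + 1) → ℝ}
    (hx : x ∈ P.linCone) (hne : x ≠ 0) : 0 < x 0 := by
  obtain ⟨y₀, hy₀, hneg⟩ := P.exists_interior_point
  rcases lt_trichotomy (x 0) 0 with h | h | h
  · exfalso
    have hc : 0 < (-(x 0))⁻¹ := inv_pos.mpr (by linarith)
    set q := kleinLift y₀ + (-(x 0))⁻¹ • x with hq
    have hqmem : q ∈ P.linCone :=
      P.add_mem_linCone (fun i => (hneg i).le) (P.smul_mem_linCone hx hc.le)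
    have hq0 : q = 0 := P.eq_zero_of_mem_linCone hn hfv hqmem (by
      simp only [hq, Pi.add_apply, Pi.smul_apply, kleinLift_zero, smul_eq_mul]
      rw [inv_neg, neg_mul, inv_mul_cancel₀ h.ne, add_neg_cancel])
    have hempty : ∀ i : Fin P.m, False := fun i => by
      have h1 := congrArg (mink (P.e i)) hq0
      rw [hq, mink_add_right, mink_smul_right, mink_zero_right] at h1
      nlinarith [hneg i, hx i]
    obtain ⟨u, hu0, -⟩ := exists_ne_zero_inner_eq_zero hn (0 : EuclideanSpace ℝ (Fin n))
    have h2 : horizontal u = 0 :=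
      P.eq_zero_of_mem_linCone hn hfv (fun i => (hempty i).elim) rfl
    exact hu0 (congrArg spatial h2)
  · exact absurd (P.eq_zero_of_mem_linCone hn hfv hx h) hne
  · exact h

theorem mink_self_nonpos_of_mem_linCone (hn : 2 ≤ n) (hfv : P.FiniteVolume)
    {x : Fin (n + 1) → ℝ} (hx : x ∈ P.linCone) (hne : x ≠ 0) : mink x x ≤ 0 := by
  have hx0 := P.coord_zero_pos_of_mem_linCone hn hfv hx hne
  have h1 := P.cl_eq_inter.subset (P.kleinMap_mem_cl hn hfv hx hx0)
  rw [eq_smul_kleinLift hx0.ne', mink_smul_left, mink_smul_right, mink_self_eq, kleinLift_zero,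
    spatial_kleinLift]
  have h2 : ‖kleinMap x‖ ^ 2 ≤ 1 := by nlinarith [h1.1, norm_nonneg (kleinMap x)]
  nlinarith [mul_pos hx0 hx0]

theorem eq_zero_of_mem_of_neg_mem (hn : 2 ≤ n) (hfv : P.FiniteVolume) {x : Fin (n + 1) → ℝ}
    (hx : x ∈ P.linCone) (hx' : -x ∈ P.linCone) : x = 0 := by
  by_contra hne
  have h1 := P.coord_zero_pos_of_mem_linCone hn hfv hx hne
  have h2 := P.coord_zero_pos_of_mem_linCone hn hfv hx' (neg_ne_zero.mpr hne)
  rw [Pi.neg_apply] at h2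
  linarith

/-- The cone over a polyhedron of finite volume is generated by its vertices. -/
theorem exists_sum_eq_of_mem_linCone (hn : 2 ≤ n) (hfv : P.FiniteVolume) {x : Fin (n + 1) → ℝ}
    (hx : x ∈ P.linCone) : ∃ a : (Fin (n + 1) → ℝ) → ℝ, (∀ v, 0 ≤ a v) ∧
      x = ∑ v ∈ hfv.1.toFinset.image kleinLift, a v • v := by
  classical
  rcases eq_or_ne x 0 with rfl | hne
  · exact ⟨fun _ => 0, fun _ => le_rfl, by simp⟩
  have hx0 := P.coord_zero_pos_of_mem_linCone hn hfv hx hne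
  have hmem := P.kleinMap_mem_cl hn hfv hx hx0
  rw [hfv.2, ← hfv.1.coe_toFinset, Finset.mem_convexHull'] at hmem
  obtain ⟨w, hw0, hw1, hwx⟩ := hmem
  have hinj : Function.Injective (kleinLift : EuclideanSpace ℝ (Fin n) → _) := fun y z h =>
    congrArg spatial h
  refine ⟨fun v => x 0 * max (w (spatial v)) 0, fun v => by positivity, ?_⟩
  rw [Finset.sum_image hinj.injOn]
  have hsum : ∑ y ∈ hfv.1.toFinset, w y • kleinLift y = kleinLift (kleinMap x) := by
    refine ext_spatial ?_ ?_
    · simpa using hw1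
    · rw [spatial_kleinLift, ← hwx]
      ext i
      simp [spatial, kleinLift, Finset.sum_apply]
  conv_lhs => rw [eq_smul_kleinLift hx0.ne', ← hsum, Finset.smul_sum]
  refine Finset.sum_congr rfl fun y hy => ?_
  simp only [spatial_kleinLift, max_eq_left (hw0 y hy), smul_smul]

theorem exists_eq_smul_of_add_sub_mem (hn : 2 ≤ n) (hfv : P.FiniteVolume)
    {y : EuclideanSpace ℝ (Fin n)} (hy : y ∈ P.verts) {u : Fin (n + 1) → ℝ}
    (h1 : kleinLift y + u ∈ P.linCone) (h2 : kleinLift y - u ∈ P.linCone) :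
    ∃ c : ℝ, u = c • kleinLift y := by
  rcases eq_or_ne (kleinLift y + u) 0 with h10 | h10
  · exact ⟨-1, by rw [neg_one_smul]; exact (neg_eq_of_add_eq_zero_right h10).symm⟩
  rcases eq_or_ne (kleinLift y - u) 0 with h20 | h20
  · exact ⟨1, by rw [one_smul]; exact (sub_eq_zero.mp h20).symm⟩
  have hp := P.coord_zero_pos_of_mem_linCone hn hfv h1 h10
  have hq := P.coord_zero_pos_of_mem_linCone hn hfv h2 h20
  have hext := P.verts_subset_extremePoints hy
  have hseg : y ∈ openSegment ℝ (kleinMap (kleinLift y + u)) (kleinMap (kleinLift y - u)) := by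
    refine ⟨(kleinLift y + u) 0 / 2, (kleinLift y - u) 0 / 2, by positivity, by positivity, ?_, ?_⟩
    · simp only [Pi.add_apply, Pi.sub_apply, kleinLift_zero]
      ring
    · have h3 := congrArg spatial (eq_smul_kleinLift hp.ne')
      have h4 := congrArg spatial (eq_smul_kleinLift hq.ne')
      rw [spatial_smul, spatial_kleinLift, spatial_add, spatial_kleinLift] at h3
      rw [spatial_smul, spatial_kleinLift, spatial_sub, spatial_kleinLift] at h4
      rw [div_eq_inv_mul, div_eq_inv_mul, mul_smul, mul_smul, ← h3, ← h4, ← smul_add,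
        add_add_sub_cancel, ← two_smul ℝ y, smul_smul]
      norm_num
  have h5 := hext.2 (P.kleinMap_mem_cl hn hfv h1 hp) (P.kleinMap_mem_cl hn hfv h2 hq) hseg
  refine ⟨(kleinLift y + u) 0 - 1, ?_⟩
  have h6 := eq_smul_kleinLift hp.ne'
  rw [h5] at h6
  rw [sub_smul, ← h6, one_smul, add_sub_cancel_left]

end Causal

end HypPolyhedron

/-- A finite strictly feasible system of linear inequalities on a subspace has an irredundant
subsystem; each of its members is tight at a point where the other members are strict. -/
theorem exists_irredundant_subsystem {κ E : Type*} [AddCommGroup E] [Module ℝ E]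
    (f : κ → E →ₗ[ℝ] ℝ) (W : Submodule ℝ E) (s : Finset κ) {p : E} (hpW : p ∈ W)
    (hp : ∀ k ∈ s, f k p < 0) :
    ∃ J ⊆ s, (∀ x ∈ W, (∀ k ∈ J, f k x ≤ 0) → ∀ k ∈ s, f k x ≤ 0) ∧
      ∀ k ∈ J, ∃ z ∈ W, f k z = 0 ∧ ∀ j ∈ J, j ≠ k → f j z < 0 := by
  classical
  obtain ⟨J, hJ, hmin⟩ := Finset.exists_min_image
    (s.powerset.filter fun J => ∀ x ∈ W, (∀ k ∈ J, f k x ≤ 0) → ∀ k ∈ s, f k x ≤ 0)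
    Finset.card ⟨s, by simp⟩
  rw [Finset.mem_filter, Finset.mem_powerset] at hJ
  refine ⟨J, hJ.1, hJ.2, fun k hk => ?_⟩
  have hred : ¬∀ x ∈ W, (∀ j ∈ J.erase k, f j x ≤ 0) → ∀ j ∈ s, f j x ≤ 0 := fun h => by
    have h1 := hmin (J.erase k) (by
      rw [Finset.mem_filter, Finset.mem_powerset]
      exact ⟨(Finset.erase_subset _ _).trans hJ.1, h⟩)
    have h2 := Finset.card_erase_lt_of_mem hk
    omega
  push Not at hred
  obtain ⟨x, hxW, hx, i, hi, hix⟩ := hred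
  have hkx : 0 < f k x := by
    by_contra! hcon
    refine hix.not_ge (hJ.2 x hxW (fun j hj => ?_) i hi)
    rcases eq_or_ne j k with rfl | hjk
    · exact hcon
    · exact hx j (Finset.mem_erase.mpr ⟨hjk, hj⟩)
  have hkp := hp k (hJ.1 hk)
  refine ⟨f k x • p - f k p • x, W.sub_mem (W.smul_mem _ hpW) (W.smul_mem _ hxW), ?_,
    fun j hj hjk => ?_⟩
  · simp only [map_sub, map_smul, smul_eq_mul]
    ring
  · have h1 := hp j (hJ.1 hj)
    have h2 := hx j (Finset.mem_erase.mpr ⟨hjk, hj⟩)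
    simp only [map_sub, map_smul, smul_eq_mul]
    nlinarith [mul_pos hkx (neg_pos.mpr h1), mul_nonneg_of_nonpos_of_nonpos hkp.le h2]

theorem exists_pos_forall_add_mul_nonpos {κ : Type*} (s : Finset κ) (a b : κ → ℝ)
    (h : ∀ k ∈ s, a k < 0 ∨ a k ≤ 0 ∧ b k ≤ 0) :
    ∃ ε : ℝ, 0 < ε ∧ ∀ k ∈ s, a k + ε * b k ≤ 0 := by
  have hev : ∀ᶠ ε : ℝ in nhdsWithin 0 (Set.Ioi 0), ∀ k ∈ s, a k + ε * b k ≤ 0 := by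
    rw [Filter.eventually_all_finset]
    intro k hk
    rcases h k hk with hlt | ⟨ha, hb⟩
    · have hcont : Continuous fun ε : ℝ => a k + ε * b k := by fun_prop
      have := hcont.continuousAt.eventually_lt (x₀ := (0 : ℝ)) (g := fun _ => (0 : ℝ))
        continuousAt_const (by simpa using hlt)
      exact (this.mono fun _ h => h.le).filter_mono nhdsWithin_le_nhds
    · filter_upwards [self_mem_nhdsWithin] with ε hε
      have hε' : 0 < ε := hε
      nlinarith
  obtain ⟨ε, h1, h2⟩ := (hev.and self_mem_nhdsWithin).exists
  exact ⟨ε, h2, h1⟩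

theorem spatial_sum_smul {n : ℕ} {κ : Type*} (s : Finset κ) (c : κ → ℝ)
    (g : κ → Fin (n + 1) → ℝ) : spatial (∑ k ∈ s, c k • g k) = ∑ k ∈ s, c k • spatial (g k) := by
  ext i
  simp [spatial]

/-- Independent normals of hyperplanes through a common point off `x₀ = 0` have independent
spatial parts. -/
theorem linearIndependent_spatial {n : ℕ} {κ : Type*} [Fintype κ] {g : κ → Fin (n + 1) → ℝ}
    (hg : LinearIndependent ℝ g) {z : Fin (n + 1) → ℝ} (hz0 : z 0 ≠ 0)
    (hgz : ∀ k, mink (g k) z = 0) : LinearIndependent ℝ fun k => spatial (g k) := by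
  rw [Fintype.linearIndependent_iff] at hg ⊢
  intro c hc
  refine hg c ?_
  rw [← spatial_sum_smul] at hc
  refine ext_spatial ?_ hc
  have h1 : mink (∑ k, c k • g k) z = 0 := by
    rw [mink_comm, mink_sum_right]
    refine Finset.sum_eq_zero fun k _ => ?_
    rw [mink_smul_right, mink_comm, hgz, mul_zero]
  rw [mink_eq_inner, hc, inner_zero_left, add_zero, neg_eq_zero] at h1
  exact (mul_eq_zero.mp h1).resolve_right hz0

namespace HypPolyhedron

section Faces

variable {n : ℕ} (P : HypPolyhedron n)

theorem isExposed_of_nonpos {e : Fin (n + 1) → ℝ} (he : ∀ y ∈ P.cl, mink e (kleinLift y) ≤ 0) :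
    IsExposed ℝ P.cl {y ∈ P.cl | mink e (kleinLift y) = 0} := by
  rintro ⟨y₀, hy₀, hy₀e⟩
  refine ⟨innerSL ℝ (spatial e), ?_⟩
  have hl : ∀ y, innerSL ℝ (spatial e) y = mink e (kleinLift y) + e 0 := fun y => by
    rw [mink_kleinLift, innerSL_apply_apply]
    ring
  ext y
  constructor
  · rintro ⟨hy, hye⟩
    refine ⟨hy, fun w hw => ?_⟩
    rw [hl, hl, hye]
    linarith [he w hw]
  · rintro ⟨hy, hmax⟩
    refine ⟨hy, le_antisymm (he y hy) ?_⟩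
    have := hmax y₀ hy₀
    rw [hl, hl, hy₀e] at this
    linarith

/-- The dimension of a face cut out by independent hyperplanes, near a relatively interior
point. -/
theorem nonempty_and_sdim_eq (hn : 2 ≤ n) (hfv : P.FiniteVolume) {r : ℕ} (hr : r ≤ n)
    {g : Fin r → Fin (n + 1) → ℝ} (hg : LinearIndependent ℝ g) {z : Fin (n + 1) → ℝ}
    (hz : z ∈ P.linCone) (hgz : ∀ j, mink (g j) z = 0)
    (hu : ∀ u, (∀ j, mink (g j) u = 0) → ∃ ε : ℝ, 0 < ε ∧ z + ε • u ∈ P.linCone) :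
    {y ∈ P.cl | ∀ j, mink (g j) (kleinLift y) = 0}.Nonempty ∧
      sdim {y ∈ P.cl | ∀ j, mink (g j) (kleinLift y) = 0} = n - r := by
  have hscale : ∀ {ε : ℝ} {x : Fin (n + 1) → ℝ}, 0 < ε → ε • x ∈ P.linCone → x ∈ P.linCone := by
    intro ε x hε hx
    have := P.smul_mem_linCone hx (inv_nonneg.mpr hε.le)
    rwa [smul_smul, inv_mul_cancel₀ hε.ne', one_smul] at this
  have hzne : z ≠ 0 := by
    rintro rfl
    obtain ⟨u, hu0, huz⟩ := exists_ne_zero_of_card_lt (fun j => minkB n (g j))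
      (by simpa using Nat.lt_succ_of_le hr)
    obtain ⟨ε, hε, h1⟩ := hu u huz
    obtain ⟨δ, hδ, h2⟩ := hu (-u) fun j => by
      rw [mink_neg_right, show mink (g j) u = 0 from huz j, neg_zero]
    rw [zero_add] at h1 h2
    exact hu0 (P.eq_zero_of_mem_of_neg_mem hn hfv (hscale hε h1) (hscale hδ h2))
  have hz0 := P.coord_zero_pos_of_mem_linCone hn hfv hz hzne
  set F := {y ∈ P.cl | ∀ j, mink (g j) (kleinLift y) = 0} with hF
  have hmem : ∀ y, y ∈ F ↔ kleinLift y ∈ P.linCone ∧ ∀ j, mink (g j) (kleinLift y) = 0 := by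
    intro y
    rw [hF, P.cl_eq_preimage hn hfv]
    rfl
  have hlz := kleinLift_kleinMap hz0.ne'
  have hzF : kleinMap z ∈ F := by
    rw [hmem, hlz]
    refine ⟨P.smul_mem_linCone hz (inv_nonneg.mpr hz0.le), fun j => ?_⟩
    rw [mink_smul_right, hgz, mul_zero]
  refine ⟨⟨_, hzF⟩, ?_⟩
  have hspan : vectorSpan ℝ F = (Submodule.span ℝ (Set.range fun j => spatial (g j)))ᗮ := by
    refine le_antisymm ?_ fun d hd => ?_
    · rw [vectorSpan_def, Submodule.span_le]
      rintro _ ⟨a, ha, b, hb, rfl⟩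
      have ha' := ((hmem a).mp ha).2
      have hb' := ((hmem b).mp hb).2
      rw [SetLike.mem_coe, Submodule.mem_orthogonal]
      intro w hw
      induction hw using Submodule.span_induction with
      | mem w hw =>
        obtain ⟨j, rfl⟩ := hw
        have h1 := ha' j
        have h2 := hb' j
        rw [mink_kleinLift] at h1 h2
        simp only [vsub_eq_sub, inner_sub_right]
        linarith
      | zero => rw [inner_zero_left]
      | add x y _ _ hx hy => rw [inner_add_left, hx, hy, add_zero]
      | smul c x _ hx => rw [real_inner_smul_left, hx, mul_zero]
    · have hd' : ∀ j, mink (g j) (horizontal d) = 0 := fun j => by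
        rw [mink_horizontal]
        exact (Submodule.mem_orthogonal _ _).mp hd _ (Submodule.subset_span ⟨j, rfl⟩)
      obtain ⟨ε, hε, h1⟩ := hu _ hd'
      have hy : kleinMap z + (ε / z 0) • d ∈ F := by
        have h2 : kleinLift (kleinMap z + (ε / z 0) • d) = (z 0)⁻¹ • (z + ε • horizontal d) := by
          rw [kleinLift_add_smul, hlz, smul_add, smul_smul, div_eq_inv_mul]
        rw [hmem, h2]
        refine ⟨P.smul_mem_linCone h1 (inv_nonneg.mpr hz0.le), fun j => ?_⟩
        rw [mink_smul_right, mink_add_right, mink_smul_right, hgz, hd', mul_zero, add_zero,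
          mul_zero]
      have h3 := vsub_mem_vectorSpan ℝ hy hzF
      rw [vsub_eq_sub, add_sub_cancel_left] at h3
      exact (Submodule.smul_mem_iff _ (div_pos hε hz0).ne').mp h3
  have h1 := Submodule.finrank_add_finrank_orthogonal
    (Submodule.span ℝ (Set.range fun j => spatial (g j)))
  rw [finrank_span_eq_card (linearIndependent_spatial hg hz0.ne' hgz), ← hspan,
    finrank_euclideanSpace, Fintype.card_fin, Fintype.card_fin] at h1
  rw [sdim]
  omega

/-- Two bounding hyperplanes meeting in a face of codimension two are orthogonal. -/
theorem IsRightAngled.mink_eq_zero {P : HypPolyhedron n} (hra : P.IsRightAngled) (hn : 2 ≤ n)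
    (hfv : P.FiniteVolume) {i k : Fin P.m} (hik : i ≠ k)
    (hind : LinearIndependent ℝ ![P.e i, P.e k]) {w : Fin (n + 1) → ℝ} (hw : w ∈ P.linCone)
    (hwi : mink (P.e i) w = 0) (hwk : mink (P.e k) w = 0)
    (hu : ∀ u, mink (P.e i) u = 0 → mink (P.e k) u = 0 →
      ∃ ε : ℝ, 0 < ε ∧ w + ε • u ∈ P.linCone) : mink (P.e i) (P.e k) = 0 := by
  have hdim := P.nonempty_and_sdim_eq hn hfv hn hind hw
    (by simpa [Fin.forall_fin_two] using ⟨hwi, hwk⟩)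
    (fun u h => hu u (by simpa using h 0) (by simpa using h 1))
  have hcl : ∀ y ∈ P.cl, kleinLift y ∈ P.linCone := fun y hy => (P.cl_eq_inter.subset hy).2
  have hset : {y ∈ P.cl | ∀ j, mink (![P.e i, P.e k] j) (kleinLift y) = 0} =
      {y ∈ P.cl | mink (P.e i + P.e k) (kleinLift y) = 0} := by
    ext y
    refine and_congr_right fun hy => ?_
    have h1 := hcl y hy i
    have h2 := hcl y hy k
    simp only [Fin.forall_fin_two, Matrix.cons_val_zero, Matrix.cons_val_one, mink_add_left]
    constructor
    · rintro ⟨h3, h4⟩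
      rw [h3, h4, add_zero]
    · intro h3
      constructor <;> linarith
  refine hra i k hik ⟨_, ⟨?_, hdim⟩, ?_, ?_⟩
  · rw [hset]
    refine P.isExposed_of_nonpos fun y hy => ?_
    rw [mink_add_left]
    exact add_nonpos (hcl y hy i) (hcl y hy k)
  all_goals
    rintro x ⟨⟨-, hx0⟩, -⟩ ⟨-, hx⟩
    have h0 := hx 0
    have h1 := hx 1
    simp only [Matrix.cons_val_zero, Matrix.cons_val_one, kleinLift_kleinMap hx0.ne',
      mink_smul_right, mul_eq_zero, inv_eq_zero, hx0.ne', false_or] at h0 h1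
    assumption

end Faces

end HypPolyhedron

namespace HypPolyhedron

section Irredundant

variable {n : ℕ} (P : HypPolyhedron n)

/-- The half-spaces indexed by `I` cut out the polyhedron, and each of them is tight at a point
where the others are strict. -/
def IsIrredundant (I : Finset (Fin P.m)) : Prop :=
  (∀ x, (∀ k ∈ I, mink (P.e k) x ≤ 0) → x ∈ P.linCone) ∧
    ∀ k ∈ I, ∃ z, mink (P.e k) z = 0 ∧ ∀ j ∈ I, j ≠ k → mink (P.e j) z < 0

theorem exists_isIrredundant : ∃ I, P.IsIrredundant I := by
  obtain ⟨y₀, -, hneg⟩ := P.exists_interior_point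
  obtain ⟨I, -, h1, h2⟩ := exists_irredundant_subsystem (fun i => minkB n (P.e i)) ⊤ Finset.univ
    (Submodule.mem_top (x := kleinLift y₀)) (fun k _ => hneg k)
  refine ⟨I, fun x hx k => h1 x Submodule.mem_top hx k (Finset.mem_univ k), fun k hk => ?_⟩
  obtain ⟨z, -, hz⟩ := h2 k hk
  exact ⟨z, hz⟩

namespace IsIrredundant

variable {P} {I : Finset (Fin P.m)}

theorem linearIndependent_pair (hI : P.IsIrredundant I) {i k : Fin P.m} (hi : i ∈ I) (hk : k ∈ I)
    (hik : i ≠ k) : LinearIndependent ℝ ![P.e i, P.e k] := by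
  obtain ⟨zi, hzi, hzi'⟩ := hI.2 i hi
  obtain ⟨zk, hzk, hzk'⟩ := hI.2 k hk
  rw [LinearIndependent.pair_iff]
  intro s t hst
  have h1 := congrArg (fun x => mink x zi) hst
  have h2 := congrArg (fun x => mink x zk) hst
  simp only [mink_add_left, mink_smul_left, mink_zero_left, hzi, hzk, mul_zero, zero_add,
    add_zero] at h1 h2
  exact ⟨(mul_eq_zero.mp h2).resolve_right (hzk' i hi hik).ne,
    (mul_eq_zero.mp h1).resolve_right (hzi' k hk hik.symm).ne⟩

/-- If `J` describes the facet `i` and a point of the facet is tight only for `k ∈ J`, then the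
hyperplanes of `i` and `k` are orthogonal. -/
theorem mink_eq_zero_of_ridge (hI : P.IsIrredundant I) (hn : 2 ≤ n) (hfv : P.FiniteVolume)
    (hra : P.IsRightAngled) {i k : Fin P.m} (hi : i ∈ I) (hk : k ∈ I) (hik : i ≠ k)
    {J : Finset (Fin P.m)} (hJ : ∀ x, mink (P.e i) x = 0 → (∀ j ∈ J, mink (P.e j) x ≤ 0) →
      ∀ j ∈ I, j ≠ i → mink (P.e j) x ≤ 0) {w : Fin (n + 1) → ℝ} (hwi : mink (P.e i) w = 0)
    (hwk : mink (P.e k) w = 0) (hw : ∀ j ∈ J, j ≠ k → mink (P.e j) w < 0) :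
    mink (P.e i) (P.e k) = 0 := by
  have hmem : ∀ x, mink (P.e i) x = 0 → (∀ j ∈ J, mink (P.e j) x ≤ 0) → x ∈ P.linCone := by
    intro x hxi hx
    refine hI.1 x fun j hj => ?_
    rcases eq_or_ne j i with rfl | hji
    · exact hxi.le
    · exact hJ x hxi hx j hj hji
  have hw' : ∀ j ∈ J, mink (P.e j) w ≤ 0 := fun j hj => by
    rcases eq_or_ne j k with rfl | hjk
    · exact hwk.le
    · exact (hw j hj hjk).le
  refine hra.mink_eq_zero hn hfv hik (hI.linearIndependent_pair hi hk hik) (hmem w hwi hw') hwi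
    hwk fun u hui huk => ?_
  obtain ⟨ε, hε, h⟩ := exists_pos_forall_add_mul_nonpos J (fun j => mink (P.e j) w)
    (fun j => mink (P.e j) u) fun j hj => by
      rcases eq_or_ne j k with rfl | hjk
      · exact Or.inr ⟨hwk.le, huk.le⟩
      · exact Or.inl (hw j hj hjk)
  refine ⟨ε, hε, hmem _ ?_ fun j hj => ?_⟩
  · rw [mink_add_right, mink_smul_right, hwi, hui, mul_zero, add_zero]
  · rw [mink_add_right, mink_smul_right]
    exact h j hj

theorem mink_nonpos (hI : P.IsIrredundant I) (hn : 2 ≤ n) (hfv : P.FiniteVolume)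
    (hra : P.IsRightAngled) {i k : Fin P.m} (hi : i ∈ I) (hk : k ∈ I) (hik : i ≠ k) :
    mink (P.e i) (P.e k) ≤ 0 := by
  classical
  obtain ⟨zi, hzi, hzi'⟩ := hI.2 i hi
  obtain ⟨zk, hzk, hzk'⟩ := hI.2 k hk
  obtain ⟨J, hJI, hJ, hJz⟩ := exists_irredundant_subsystem (fun j => minkB n (P.e j))
    (LinearMap.ker (minkB n (P.e i))) (I.erase i) (p := zi) hzi
    (fun j hj => hzi' j (Finset.mem_of_mem_erase hj) (Finset.ne_of_mem_erase hj))
  have hJ' : ∀ x, mink (P.e i) x = 0 → (∀ j ∈ J, mink (P.e j) x ≤ 0) →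
      ∀ j ∈ I, j ≠ i → mink (P.e j) x ≤ 0 := fun x hxi hx j hj hji =>
    hJ x hxi hx j (Finset.mem_erase.mpr ⟨hji, hj⟩)
  have hortho : ∀ j ∈ J, mink (P.e i) (P.e j) = 0 := fun j hj => by
    obtain ⟨w, hwi, hwj, hw⟩ := hJz j hj
    exact hI.mink_eq_zero_of_ridge hn hfv hra hi (Finset.mem_of_mem_erase (hJI hj))
      (Finset.ne_of_mem_erase (hJI hj)).symm hJ' hwi hwj hw
  have h1 := hJ' (zk - mink (P.e i) zk • P.e i)
    (by rw [mink_sub_right, mink_smul_right, P.unit, mul_one, sub_self])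
    (fun j hj => by
      rw [mink_sub_right, mink_smul_right, mink_comm (P.e j) (P.e i), hortho j hj, mul_zero,
        sub_zero]
      rcases eq_or_ne j k with rfl | hjk
      · exact hzk.le
      · exact (hzk' j (Finset.mem_of_mem_erase (hJI hj)) hjk).le) k hk hik.symm
  rw [mink_sub_right, mink_smul_right, hzk, mink_comm (P.e k) (P.e i)] at h1
  nlinarith [hzk' i hi hik]

theorem mink_eq_zero_or_le (hI : P.IsIrredundant I) (hn : 2 ≤ n) (hfv : P.FiniteVolume)
    (hra : P.IsRightAngled) {i k : Fin P.m} (hi : i ∈ I) (hk : k ∈ I) (hik : i ≠ k) :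
    mink (P.e i) (P.e k) = 0 ∨ mink (P.e i) (P.e k) ≤ -1 := by
  classical
  by_contra! hcon
  obtain ⟨hne, hgt⟩ := hcon
  obtain ⟨y₀, -, hneg⟩ := P.exists_interior_point
  have hg := hI.mink_nonpos hn hfv hra hi hk hik
  refine hne ?_
  set g := mink (P.e i) (P.e k) with hgdef
  set p := kleinLift y₀
  set a := mink (P.e i) p - g * mink (P.e k) p with ha
  set b := mink (P.e k) p - g * mink (P.e i) p with hb
  have hgk : mink (P.e k) (P.e i) = g := mink_comm _ _
  have ha0 : a < 0 := by nlinarith [hneg i, hneg k]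
  have hb0 : b < 0 := by nlinarith [hneg i, hneg k]
  have hdet : 0 < 1 - g ^ 2 := by nlinarith
  refine hI.mink_eq_zero_of_ridge hn hfv hra hi hk hik (J := I.erase i)
    (w := (1 - g ^ 2) • p - a • P.e i - b • P.e k)
    (fun x _ hx j hj hji => hx j (Finset.mem_erase.mpr ⟨hji, hj⟩)) ?_ ?_ fun j hj hjk => ?_
  · simp only [mink_sub_right, mink_smul_right, P.unit, ← hgdef, ha, hb]
    ring
  · simp only [mink_sub_right, mink_smul_right, P.unit, hgk, ha, hb]
    ring
  · have hjI := Finset.mem_of_mem_erase hj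
    have h1 := hI.mink_nonpos hn hfv hra hjI hi (Finset.ne_of_mem_erase hj)
    have h2 := hI.mink_nonpos hn hfv hra hjI hk hjk
    simp only [mink_sub_right, mink_smul_right]
    have h3 := mul_neg_of_pos_of_neg hdet (hneg j)
    have h4 := mul_nonneg_of_nonpos_of_nonpos ha0.le h1
    have h5 := mul_nonneg_of_nonpos_of_nonpos hb0.le h2
    linarith

/-- Each member of an irredundant family of half-spaces bounds a facet of its own. -/
theorem card_le (hI : P.IsIrredundant I) (hn : 2 ≤ n) (hfv : P.FiniteVolume) :
    I.card ≤ P.a (n - 1) := by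
  let F : Fin P.m → Set (EuclideanSpace ℝ (Fin n)) := fun i =>
    {y ∈ P.cl | mink (P.e i) (kleinLift y) = 0}
  have hcl : ∀ y ∈ P.cl, kleinLift y ∈ P.linCone := fun y hy => (P.cl_eq_inter.subset hy).2
  have hmem : ∀ i ∈ I, ∀ z, mink (P.e i) z = 0 → (∀ j ∈ I, j ≠ i → mink (P.e j) z < 0) →
      z ∈ P.linCone := fun i _ z hzi hz => hI.1 z fun j hj => by
    rcases eq_or_ne j i with rfl | hji
    · exact hzi.le
    · exact (hz j hj hji).le
  have hface : ∀ i ∈ I, F i ∈ P.faces (n - 1) := by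
    intro i hi
    obtain ⟨z, hzi, hz⟩ := hI.2 i hi
    have hne : P.e i ≠ 0 := fun h => by
      have := P.unit i
      rw [h, mink_zero_left] at this
      exact zero_ne_one this
    have h1 := P.nonempty_and_sdim_eq hn hfv (r := 1) (by omega) (g := fun _ => P.e i)
      (LinearIndependent.of_subsingleton 0 hne) (hmem i hi z hzi hz) (fun _ => hzi) fun u hu => by
        obtain ⟨ε, hε, h⟩ := exists_pos_forall_add_mul_nonpos I (fun j => mink (P.e j) z)
          (fun j => mink (P.e j) u) fun j hj => by
            rcases eq_or_ne j i with rfl | hji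
            · exact Or.inr ⟨hzi.le, (hu 0).le⟩
            · exact Or.inl (hz j hj hji)
        refine ⟨ε, hε, hI.1 _ fun j hj => ?_⟩
        rw [mink_add_right, mink_smul_right]
        exact h j hj
    simp only [forall_const] at h1
    exact ⟨P.isExposed_of_nonpos fun y hy => hcl y hy i, h1⟩
  have hinj : Set.InjOn F I := by
    intro i hi j hj hij
    by_contra hne
    obtain ⟨z, hzi, hz⟩ := hI.2 i hi
    have hzne : z ≠ 0 := by
      rintro rfl
      exact (hz j hj (Ne.symm hne)).ne (mink_zero_right _)
    have hzC := hmem i hi z hzi hz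
    have hz0 := P.coord_zero_pos_of_mem_linCone hn hfv hzC hzne
    have hzF : kleinMap z ∈ F i := by
      refine ⟨P.kleinMap_mem_cl hn hfv hzC hz0, ?_⟩
      rw [kleinLift_kleinMap hz0.ne', mink_smul_right, hzi, mul_zero]
    rw [hij] at hzF
    have h1 := hzF.2
    rw [kleinLift_kleinMap hz0.ne', mink_smul_right] at h1
    exact (mul_ne_zero (inv_ne_zero hz0.ne') (hz j hj (Ne.symm hne)).ne) h1
  rw [a, ← Set.ncard_coe_finset, ← hinj.ncard_image]
  refine Set.ncard_le_ncard ?_ (P.faces_finite hfv _)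
  rintro _ ⟨i, hi, rfl⟩
  exact hface i hi

end IsIrredundant

end Irredundant

/-- The right-angled system of a right-angled polyhedron of finite volume. -/
def IsIrredundant.rightAngledSystem {P : HypPolyhedron 6} {I : Finset (Fin P.m)}
    (hI : P.IsIrredundant I) (hfv : P.FiniteVolume) (hra : P.IsRightAngled) :
    RightAngledSystem I :=
  have hcone : ∀ {x}, (∀ i : I, mink (P.e i) x ≤ 0) → x ∈ P.linCone := fun hx =>
    hI.1 _ fun k hk => hx ⟨k, hk⟩
  have hn : 2 ≤ 6 := by norm_num
  { e := fun i => P.e i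
    V := hfv.1.toFinset.image kleinLift
    p := kleinLift P.exists_interior_point.choose
    unit := fun i => P.unit i
    gram := fun i j hij =>
      hI.mink_eq_zero_or_le hn hfv hra i.2 j.2 (Subtype.coe_injective.ne hij)
    p_neg := fun i => P.exists_interior_point.choose_spec.2 i
    p_time := by
      have h := P.exists_interior_point.choose_spec.1
      rw [mink_self_eq, kleinLift_zero, spatial_kleinLift]
      nlinarith [norm_nonneg P.exists_interior_point.choose]
    causal := fun x hx hx0 => ⟨P.coord_zero_pos_of_mem_linCone hn hfv (hcone hx) hx0,
      P.mink_self_nonpos_of_mem_linCone hn hfv (hcone hx) hx0⟩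
    V_zero := by
      intro v hv
      obtain ⟨y, -, rfl⟩ := Finset.mem_image.mp hv
      rfl
    V_mem := by
      intro v hv i
      obtain ⟨y, hy, rfl⟩ := Finset.mem_image.mp hv
      exact (P.cl_eq_inter.subset (P.verts_subset_cl (hfv.1.mem_toFinset.mp hy))).2 i
    V_gen := fun x hx => P.exists_sum_eq_of_mem_linCone hn hfv (hcone hx)
    V_ext := by
      intro v hv u h1 h2
      obtain ⟨y, hy, rfl⟩ := Finset.mem_image.mp hv
      exact P.exists_eq_smul_of_add_sub_mem hn hfv (hfv.1.mem_toFinset.mp hy) (hcone h1)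
        (hcone h2) }

end HypPolyhedron

/-- Every `6`-dimensional finite-volume right-angled convex hyperbolic polyhedron has at
least `27` facets. -/
theorem facets_of_6_polyhedron (P : HypPolyhedron 6) (hfv : P.FiniteVolume)
    (hra : P.IsRightAngled) :
    27 ≤ P.a 5 := by
  obtain ⟨I, hI⟩ := P.exists_isIrredundant
  have h := (hI.rightAngledSystem hfv hra).twentySeven_le_card
  rw [Fintype.card_coe] at h
  exact h.trans (hI.card_le (by norm_num) hfv)
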